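/- arXiv:1110.3182 — 8 statements merged into one kernel-verified Lean document; each statement's English description precedes it below -/
import Mathlib

section
/- Let n and d be integers with 1 ≤ d < n, and let G be a family of distinct d-element subsets of [n] = {1,…,n} with |G| ≤ min( C(n, d+1), Σ_{j=1}^{n-d} C(2j-1, j) ). Then there exists an injective map φ from G into the (d+1)-element subsets of [n] such that g ⊆ φ(g) for every g ∈ G. -/
/-!
By Hall's theorem it suffices that every family `A` of `d`-sets, with `#A` at most the given bound,
has an upper shadow of size at least `#A`. Passing to complements and writing `k = n - d`, this is a
statement on lower shadows: a family `A` of `k`-sets with `#A ≤ ∑_{j=1}^k C(2j-1, j)` satisfies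
`#A ≤ #(∂ A)` (`card_le_card_shadow`).

By the Kruskal–Katona theorem, `A` may be taken to be an initial segment `C` of the colexicographic
order, and one inducts on `k`. If `C` lives on at most `2k-1` points, double counting the pairs
`b ⊂ a` with `a ∈ C`, `b ∈ ∂ C` gives the claim (`card_le_card_shadow_of_subset`). Otherwise `C`
contains all `k`-subsets of the first `2k-1` points, and, since
`∑_{j=1}^k C(2j-1, j) ≤ C(2k, k)` (`sum_choose_le`), it lives on the first `2k` points. So
every remaining member of `C` contains the last of these points, `v`; removing `v` from them yields
a family `B` of `(k-1)`-sets to which the induction hypothesis applies. The shadow of `C` contains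
the shadow of the `k`-subsets of the first `2k-1` points and, disjointly from it, the sets
`insert v b` for `b ∈ ∂ B`.
-/

open Finset Finset.Colex
open scoped FinsetFamily

/-- A case of the local LYM inequality: a family of `k`-subsets of a set with fewer than `2k`
elements is no larger than its shadow. -/
lemma card_le_card_shadow_of_subset {n k : ℕ} {U : Finset (Fin n)} (hU : #U + 1 ≤ 2 * k)
    {A : Finset (Finset (Fin n))} (hA : ∀ a ∈ A, a ⊆ U ∧ #a = k) : #A ≤ #(∂ A) := by
  have hk : 0 < k := by omega
  refine Nat.le_of_mul_le_mul_right ?_ hk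
  refine card_mul_le_card_mul (fun a b => b ⊆ a) (m := k) (n := k) ?_ ?_
  · intro a ha
    -- the `k` sets `a.erase x` are distinct elements of the shadow
    calc k = #(a.image fun x => a.erase x) := by
            rw [card_image_of_injOn (fun x hx y hy h => erase_injOn _ hx hy h), (hA a ha).2]
      _ ≤ _ := by
        refine card_le_card fun b hb => ?_
        obtain ⟨x, hx, rfl⟩ := mem_image.1 hb
        exact mem_filter.2 ⟨erase_mem_shadow ha hx, erase_subset _ _⟩
  · intro b hb
    obtain ⟨s, hs, x, hx, rfl⟩ := mem_shadow_iff.1 hb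
    obtain ⟨hsU, hsk⟩ := hA s hs
    set b := s.erase x with hbdef
    have hbc : #b = k - 1 := by rw [hbdef, card_erase_of_mem hx, hsk]
    have hbU : b ⊆ U := (erase_subset _ _).trans hsU
    -- each member of `A` above `b` is `insert y b` for one of the at most `k` points `y ∈ U \ b`
    calc _ ≤ #((U \ b).image fun y => insert y b) := by
            refine card_le_card fun a ha => ?_
            obtain ⟨haA, hba⟩ := mem_filter.1 ha
            obtain ⟨haU, hak⟩ := hA a haA
            have h1 : #(a \ b) = 1 := by rw [card_sdiff_of_subset hba]; omega
            obtain ⟨y, hy⟩ := card_eq_one.1 h1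
            have hya : y ∈ a \ b := by simp [hy]
            rw [mem_sdiff] at hya
            refine mem_image.2 ⟨y, mem_sdiff.2 ⟨haU hya.1, hya.2⟩, ?_⟩
            rw [← sdiff_union_of_subset hba, hy, insert_eq]
      _ ≤ #(U \ b) := card_image_le
      _ ≤ k := by rw [card_sdiff_of_subset hbU]; omega

/-- The `k`-subsets of the first `q` points form an initial segment of colex. -/
lemma isInitSeg_powersetCard (n k q : ℕ) :
    IsInitSeg (powersetCard k ({x : Fin n | x.val < q} : Finset (Fin n))) k := by
  refine ⟨Set.sized_powersetCard _ _, fun s t hs ht => ?_⟩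
  rw [mem_powersetCard] at hs ⊢
  refine ⟨fun x hx => ?_, ht.2⟩
  rw [mem_filter]
  refine ⟨mem_univ _, ?_⟩
  by_cases hq : q < n
  · refine forall_lt_mono (a := (⟨q, hq⟩ : Fin n)) ht.1.le (fun b hb => ?_) x hx
    exact (mem_filter.1 (hs.1 hb)).2
  · exact x.2.trans_le (not_lt.1 hq)

lemma exists_isInitSeg_card {n k m : ℕ} (hm : m ≤ n.choose k) :
    ∃ C : Finset (Finset (Fin n)), IsInitSeg C k ∧ #C = m := by
  induction m with
  | zero => exact ⟨∅, isInitSeg_empty, rfl⟩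
  | succ m ih =>
    obtain ⟨C, hC, hCm⟩ := ih (by omega)
    have hne : (powersetCard k (univ : Finset (Fin n)) \ C).Nonempty := by
      rw [← card_pos]
      have := le_card_sdiff C (powersetCard k (univ : Finset (Fin n)))
      rw [card_powersetCard, card_univ, Fintype.card_fin] at this
      omega
    -- adjoin the colex-least `k`-set outside `C`
    obtain ⟨s, hs, hmin⟩ := exists_min_image _ (fun t => toColex t) hne
    simp only [mem_sdiff, mem_powersetCard, subset_univ, true_and] at hs hmin
    refine ⟨insert s C, ⟨?_, ?_⟩, by rw [card_insert_of_notMem hs.2, hCm]⟩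
    · intro t ht
      rcases mem_insert.1 (mem_coe.1 ht) with rfl | ht
      · exact hs.1
      · exact hC.1 ht
    · rintro t u ht ⟨hut, huk⟩
      by_contra hu
      rw [mem_insert, not_or] at hu
      rcases mem_insert.1 ht with rfl | ht
      · exact absurd hut (not_lt.2 (hmin u ⟨huk, hu.2⟩))
      · exact hu.2 (hC.2 ht ⟨hut, huk⟩)

lemma sum_choose_le (k : ℕ) :
    ∑ j ∈ Icc 1 k, (2 * j - 1).choose j ≤ (2 * k).choose k := by
  induction k with
  | zero => simp
  | succ k ih =>
    rw [sum_Icc_succ_top (by omega)]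
    have e1 : 2 * (k + 1) - 1 = 2 * k + 1 := by omega
    have e2 : (2 * (k + 1)).choose (k + 1) = (2 * k + 1).choose k + (2 * k + 1).choose (k + 1) :=
      Nat.choose_succ_succ' _ _
    have e3 : (2 * k).choose k ≤ (2 * k + 1).choose k := Nat.choose_le_choose _ (by omega)
    rw [e1, e2]
    omega

/-- The lower-shadow form of the theorem. -/
lemma card_le_card_shadow {n : ℕ} (k : ℕ) (A : Finset (Finset (Fin n)))
    (hA : (A : Set (Finset (Fin n))).Sized k)
    (hc : #A ≤ ∑ j ∈ Icc 1 k, (2 * j - 1).choose j) : #A ≤ #(∂ A) := by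
  induction k generalizing A with
  | zero =>
    have : #A = 0 := by simpa using hc
    omega
  | succ k ih =>
    by_cases hn : n + 1 ≤ 2 * (k + 1)
    · exact card_le_card_shadow_of_subset (U := univ) (k := k + 1) (by simpa using hn)
        fun a ha => ⟨subset_univ _, hA ha⟩
    have hAn : #A ≤ n.choose (k + 1) := by simpa using hA.card_le
    obtain ⟨C, hC, hCA⟩ := exists_isInitSeg_card hAn
    refine le_trans ?_ (kruskal_katona hA hCA.le hC)
    rw [← hCA] at hc ⊢
    have hlow : ∀ q ≤ n, #({x : Fin n | x.val < q} : Finset (Fin n)) = q := fun q hq => by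
      rw [Fin.card_filter_val_lt]; omega
    set U : Finset (Fin n) := {x : Fin n | x.val < 2 * k + 1} with hUdef
    have hUc : #U = 2 * k + 1 := hlow _ (by omega)
    set P := powersetCard (k + 1) U with hPdef
    have hP : #P ≤ #(∂ P) := card_le_card_shadow_of_subset (U := U) (k := k + 1) (by omega)
      fun a ha => mem_powersetCard.1 ha
    rcases hC.total (isInitSeg_powersetCard n (k + 1) (2 * k + 1)) with hCP | hPC
    · exact card_le_card_shadow_of_subset (U := U) (k := k + 1) (by omega)
        fun a ha => mem_powersetCard.1 (hCP ha)
    change P ⊆ C at hPC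
    -- by size, `C` lives on the first `2 * (k + 1)` points
    have hCQ : C ⊆ powersetCard (k + 1) ({x : Fin n | x.val < 2 * (k + 1)} : Finset (Fin n)) := by
      rcases hC.total (isInitSeg_powersetCard n (k + 1) (2 * (k + 1))) with h | h
      · exact h
      · refine (eq_of_subset_of_card_le h ?_).ge
        rw [card_powersetCard, hlow _ (by omega)]
        exact hc.trans (sum_choose_le _)
    let v : Fin n := ⟨2 * k + 1, by omega⟩
    have hvU : v ∉ U := by simp [hUdef, v]
    have hv : ∀ s ∈ C \ P, v ∈ s := by
      intro s hs
      obtain ⟨hsC, hsP⟩ := mem_sdiff.1 hs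
      by_contra hvs
      refine hsP (mem_powersetCard.2 ⟨fun x hx => ?_, hC.1 hsC⟩)
      have h1 : x.val < 2 * (k + 1) := (mem_filter.1 ((mem_powersetCard.1 (hCQ hsC)).1 hx)).2
      have h2 : x.val ≠ 2 * k + 1 := fun h => hvs (by
        have : x = v := Fin.ext h
        exact this ▸ hx)
      exact mem_filter.2 ⟨mem_univ _, by omega⟩
    -- the link of `v` in `C`; no member of `P` contains `v`
    set B := (C \ P).image (fun s => s.erase v) with hBdef
    have hBc : #B = #C - #P := by
      rw [hBdef, card_image_of_injOn, card_sdiff_of_subset hPC]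
      intro s hs t ht h
      exact erase_injOn' v (hv s hs) (hv t ht) h
    have hPc : #P = (2 * k + 1).choose (k + 1) := by rw [hPdef, card_powersetCard, hUc]
    have hBB : #B ≤ #(∂ B) := by
      refine ih B ?_ ?_
      · intro b hb
        obtain ⟨s, hs, rfl⟩ := mem_image.1 (mem_coe.1 hb)
        rw [card_erase_of_mem (hv s hs), hC.1 (mem_sdiff.1 hs).1]
        rfl
      · rw [sum_Icc_succ_top (by omega), show 2 * (k + 1) - 1 = 2 * k + 1 by omega] at hc
        omega
    have hvB : ∀ b ∈ ∂ B, v ∉ b := by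
      intro b hb hvb
      obtain ⟨s, hs, hbs⟩ := exists_subset_of_mem_shadow hb
      obtain ⟨t, -, rfl⟩ := mem_image.1 hs
      exact notMem_erase v t (hbs hvb)
    have himg : #((∂ B).image (insert v)) = #(∂ B) := by
      refine card_image_of_injOn fun s hs t ht h => ?_
      rw [← erase_insert (hvB s hs), ← erase_insert (hvB t ht), h]
    have hdisj : Disjoint (∂ P) ((∂ B).image (insert v)) := by
      rw [disjoint_left]
      intro b hb hb'
      obtain ⟨s, hs, hbs⟩ := exists_subset_of_mem_shadow hb
      obtain ⟨t, -, rfl⟩ := mem_image.1 hb'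
      exact hvU ((mem_powersetCard.1 hs).1 (hbs (mem_insert_self v t)))
    have hsub : ∂ P ∪ (∂ B).image (insert v) ⊆ ∂ C := by
      refine union_subset (shadow_mono hPC) fun b hb => ?_
      obtain ⟨t, ht, rfl⟩ := mem_image.1 hb
      obtain ⟨a, hat, ha⟩ := mem_shadow_iff_insert_mem.1 ht
      obtain ⟨s, hs, hsa⟩ := mem_image.1 ha
      have hva : a ≠ v := by
        rintro rfl
        exact notMem_erase v s (hsa ▸ mem_insert_self _ _)
      refine mem_shadow_iff_insert_mem.2 ⟨a, ?_, ?_⟩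
      · rw [mem_insert, not_or]
        exact ⟨hva, hat⟩
      · rw [insert_comm, ← hsa, insert_erase (hv s hs)]
        exact (mem_sdiff.1 hs).1
    have := card_le_card hsub
    rw [card_union_of_disjoint hdisj, himg] at this
    have := card_le_card hPC
    omega


/-- If `G` is a family of distinct `d`-element subsets of `[n]` with
`|G| ≤ min(C(n,d+1), ∑_{j=1}^{n-d} C(2j-1,j))`, then there is an injective map `φ`
from `G` into the `(d+1)`-element subsets of `[n]` with `g ⊆ φ g` for all `g ∈ G`. -/
theorem stmt_0 (n d : ℕ) (hd : 1 ≤ d) (hdn : d < n)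
    (G : Finset (Finset (Fin n))) (hG : ∀ g ∈ G, g.card = d)
    (hcard : G.card ≤ min (Nat.choose n (d + 1))
      (∑ j ∈ Finset.Icc 1 (n - d), Nat.choose (2 * j - 1) j)) :
    ∃ φ : Finset (Fin n) → Finset (Fin n),
      Set.InjOn φ ↑G ∧ ∀ g ∈ G, g ⊆ φ g ∧ (φ g).card = d + 1 := by
  have hall : ∀ s : Finset G, #s ≤ #(s.biUnion fun g => ∂⁺ {g.1}) := by
    intro s
    set A : Finset (Finset (Fin n)) := s.map (Function.Embedding.subtype _) with hAdef
    have hAG : A ⊆ G := by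
      intro a ha
      obtain ⟨g, -, rfl⟩ := mem_map.1 ha
      exact g.2
    have hsA : #s = #A := (card_map _).symm
    have key : #Aᶜˢ ≤ #(∂ Aᶜˢ) := by
      refine card_le_card_shadow (n - d) _ ?_ ?_
      · intro a ha
        have h := hG _ (hAG (mem_compls.1 (mem_coe.1 ha)))
        rw [card_compl, Fintype.card_fin] at h
        have := card_finset_fin_le a
        omega
      · rw [card_compls]
        exact (card_le_card hAG).trans (hcard.trans (min_le_right _ _))
    rw [shadow_compls, card_compls, card_compls] at key
    rw [hsA]
    refine key.trans (card_le_card fun t ht => ?_)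
    obtain ⟨a, ha, x, hx, rfl⟩ := mem_upShadow_iff.1 ht
    obtain ⟨g, hg, rfl⟩ := mem_map.1 ha
    exact mem_biUnion.2 ⟨g, hg, insert_mem_upShadow (mem_singleton_self _) hx⟩
  obtain ⟨f, hf, hfm⟩ := (all_card_le_biUnion_card_iff_exists_injective _).1 hall
  refine ⟨fun g => if h : g ∈ G then f ⟨g, h⟩ else ∅, ?_, ?_⟩
  · intro a ha b hb hab
    rw [mem_coe] at ha hb
    simp only [ha, hb, dif_pos] at hab
    exact congrArg Subtype.val (hf hab)
  · intro g hg
    simp only [hg, dif_pos]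
    obtain ⟨s, hs, x, hx, h⟩ := mem_upShadow_iff.1 (hfm ⟨g, hg⟩)
    rw [mem_singleton] at hs
    subst hs
    rw [← h, card_insert_of_notMem hx, hG _ hg]
    exact ⟨subset_insert _ _, rfl⟩
end

section
/- Let k and i be integers with k ≥ i ≥ 1, and let a_i, a_{i+1}, …, a_k be integers with a_k > a_{k-1} > ⋯ > a_i ≥ i. Set x = Σ_{j=i}^{k} C(a_j, j). If x ≤ ξ_k := Σ_{j=1}^{k} C(2j-1, j), then Σ_{j=i}^{k} C(a_j, j-1) ≥ x. -/
/-!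
Write `x` for the given sum `∑ C(a_j, j)` and `∂` for `∑ C(a_j, j-1)`.

The proof rests on a numerical form of the local LYM (normalized matching) inequality,
`macaulay_lym`: `x ≤ C(a_k + 1, k)` and `k (x + ∂) ≤ (a_k + 2) ∂`. The second bound is
`k x ≤ (n - k + 1) ∂` with `n = a_k + 1`, freed of subtraction; it follows by induction on `k`
from `(k + 1) C(a + 1, k + 1) = (a + 1) C(a, k)`. When `a_k + 2 ≤ 2 k` it gives `x ≤ ∂` at once.

The numbers `2j - 1` are the digits of `ξ_k`, so the hypothesis `x ≤ ξ_k` compares `a`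
lexicographically with them. Since `ξ_k < C(2k, k)` (`xi_lt_centralBinom`), it forces
`a_k ≤ 2k - 1`. If `a_k ≤ 2k - 2`, the inequality above applies. If `a_k = 2k - 1`, the top terms
of `x` and `∂` coincide by symmetry and equal the top term of `ξ_k`, so they cancel and the claim
descends to `k - 1`.
-/

/-- The local LYM inequality for Macaulay sums, cleared of denominators and subtraction, together
with the bound on the sum by the next binomial coefficient that its induction requires. -/
theorem macaulay_lym (i : ℕ) (hi : 1 ≤ i) (a : ℕ → ℕ) (k : ℕ) (hik : i ≤ k)
    (hmono : ∀ j ∈ Finset.Icc i k, ∀ j' ∈ Finset.Icc i k, j < j' → a j < a j') :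
    (∑ j ∈ Finset.Icc i k, Nat.choose (a j) j) ≤ Nat.choose (a k + 1) k ∧
    k * ((∑ j ∈ Finset.Icc i k, Nat.choose (a j) j) +
        ∑ j ∈ Finset.Icc i k, Nat.choose (a j) (j - 1)) ≤
      (a k + 2) * ∑ j ∈ Finset.Icc i k, Nat.choose (a j) (j - 1) := by
  induction k, hik using Nat.le_induction with
  | base =>
    obtain ⟨m, rfl⟩ : ∃ m, i = m + 1 := ⟨i - 1, by omega⟩
    simp only [Finset.Icc_self, Finset.sum_singleton, Nat.add_sub_cancel]
    refine ⟨Nat.choose_le_choose _ (Nat.le_succ _), ?_⟩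
    have h1 := Nat.add_one_mul_choose_eq (a (m + 1)) m
    have h2 := Nat.choose_succ_succ' (a (m + 1)) m
    rw [h2] at h1
    nlinarith
  | succ k hk ih =>
    have hlt : a k < a (k + 1) :=
      hmono k (by simp; omega) (k + 1) (by simp; omega) (Nat.lt_succ_self k)
    obtain ⟨ih1, ih2⟩ := ih fun j hj j' hj' h =>
      hmono j (by simp at hj ⊢; omega) j' (by simp at hj' ⊢; omega) h
    rw [Finset.sum_Icc_succ_top (by omega), Finset.sum_Icc_succ_top (by omega)]
    simp only [Nat.add_sub_cancel]
    generalize (∑ j ∈ Finset.Icc i k, Nat.choose (a j) j) = y at *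
    generalize (∑ j ∈ Finset.Icc i k, Nat.choose (a j) (j - 1)) = d at *
    have hy : y ≤ Nat.choose (a (k + 1)) k := ih1.trans (Nat.choose_le_choose _ hlt)
    have h1 := Nat.add_one_mul_choose_eq (a (k + 1)) k
    have h2 := Nat.choose_succ_succ' (a (k + 1)) k
    refine ⟨by omega, ?_⟩
    rw [h2] at h1
    have h3 : (a k + 2) * d ≤ (a (k + 1) + 1) * d := Nat.mul_le_mul_right _ (by omega)
    nlinarith

theorem choose_two_mul_add_two (k : ℕ) :
    Nat.choose (2 * k + 2) (k + 1) = 2 * Nat.choose (2 * k + 1) (k + 1) := by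
  have h1 : Nat.choose (2 * k + 2) (k + 1) =
      Nat.choose (2 * k + 1) k + Nat.choose (2 * k + 1) (k + 1) :=
    Nat.choose_succ_succ' (2 * k + 1) k
  have h2 := Nat.choose_symm_half k
  omega

/-- `ξ_k < C(2k, k)`, which bounds the leading digit of any `x ≤ ξ_k` by `2k - 1`. -/
theorem xi_lt_centralBinom (k : ℕ) :
    ∑ j ∈ Finset.Icc 1 k, Nat.choose (2 * j - 1) j < Nat.choose (2 * k) k := by
  induction k with
  | zero => simp
  | succ k ih =>
    rw [Finset.sum_Icc_succ_top (by omega), show 2 * (k + 1) - 1 = 2 * k + 1 by omega,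
      show 2 * (k + 1) = 2 * k + 2 by ring, choose_two_mul_add_two]
    have h := Nat.choose_succ_succ' (2 * k) k
    omega

/-- Key lemma: if `x = ∑_{j=i}^k C(a_j, j)` is a Macaulay-type sum with
`a_k > ⋯ > a_i ≥ i ≥ 1` and `x ≤ ξ_k = ∑_{j=1}^k C(2j-1, j)`, then
`∑_{j=i}^k C(a_j, j-1) ≥ x`. -/
theorem stmt_2 (k i : ℕ) (hi : 1 ≤ i) (hik : i ≤ k) (a : ℕ → ℕ)
    (hmono : ∀ j ∈ Finset.Icc i k, ∀ j' ∈ Finset.Icc i k, j < j' → a j < a j')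
    (hai : i ≤ a i)
    (hx : (∑ j ∈ Finset.Icc i k, Nat.choose (a j) j) ≤
      ∑ j ∈ Finset.Icc 1 k, Nat.choose (2 * j - 1) j) :
    (∑ j ∈ Finset.Icc i k, Nat.choose (a j) j) ≤
      ∑ j ∈ Finset.Icc i k, Nat.choose (a j) (j - 1) := by
  have small : ∀ k, i ≤ k →
      (∀ j ∈ Finset.Icc i k, ∀ j' ∈ Finset.Icc i k, j < j' → a j < a j') → a k + 2 ≤ 2 * k →
      (∑ j ∈ Finset.Icc i k, Nat.choose (a j) j) ≤
        ∑ j ∈ Finset.Icc i k, Nat.choose (a j) (j - 1) := by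
    intro k hik hmono hak
    have h := (macaulay_lym i hi a k hik hmono).2
    have h' := h.trans (Nat.mul_le_mul_right _ hak)
    rw [Nat.mul_comm 2 k, Nat.mul_assoc] at h'
    have := Nat.le_of_mul_le_mul_left h' (by omega)
    omega
  have large : ∀ k, i ≤ k → (∑ j ∈ Finset.Icc i k, Nat.choose (a j) j) ≤
      ∑ j ∈ Finset.Icc 1 k, Nat.choose (2 * j - 1) j → a k < 2 * k := by
    intro k hik hx
    by_contra! hak
    have h1 := Nat.choose_le_choose k hak
    have h2 := xi_lt_centralBinom k
    have h3 : Nat.choose (a k) k ≤ ∑ j ∈ Finset.Icc i k, Nat.choose (a j) j :=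
      Finset.single_le_sum (f := fun j => Nat.choose (a j) j) (fun _ _ => Nat.zero_le _)
        (Finset.mem_Icc.2 ⟨hik, le_rfl⟩)
    omega
  induction k, hik using Nat.le_induction with
  | base =>
    have hlt := large i le_rfl hx
    by_cases hs : a i + 2 ≤ 2 * i
    · exact small i le_rfl hmono hs
    · obtain ⟨m, rfl⟩ : ∃ m, i = m + 1 := ⟨i - 1, by omega⟩
      have ha : a (m + 1) = 2 * m + 1 := by omega
      simp [ha, Nat.choose_symm_half]
  | succ k hk ih =>
    have hlt := large (k + 1) (by omega) hx
    by_cases hs : a (k + 1) + 2 ≤ 2 * (k + 1)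
    · exact small (k + 1) (by omega) hmono hs
    · have ha : a (k + 1) = 2 * k + 1 := by omega
      rw [Finset.sum_Icc_succ_top (by omega), Finset.sum_Icc_succ_top (by omega), ha,
        show 2 * (k + 1) - 1 = 2 * k + 1 by omega] at hx
      rw [Finset.sum_Icc_succ_top (by omega), Finset.sum_Icc_succ_top (by omega), ha,
        Nat.add_sub_cancel, Nat.choose_symm_half]
      have := ih (fun j hj j' hj' h =>
        hmono j (by simp at hj ⊢; omega) j' (by simp at hj' ⊢; omega) h) (by omega)
      omega
end

section
/- Let k ≥ 1 and let 𝒜 be a finite family of k-element finite subsets of ℕ with |𝒜| ≤ ξ_k := Σ_{j=1}^{k} C(2j-1, j). Then the shadow ∂𝒜 satisfies |∂𝒜| ≥ |𝒜|. -/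
/-!
The Kruskal–Katona theorem reduces the claim to an initial segment `𝒞` of the colexicographic order
on `k`-subsets of `Fin N`, and one inducts on `k`, writing `k = j + 1` and `x = 2j + 1`.

* If `|𝒞| ≤ C(2j+1, j+1)`, then `𝒞` consists of `(j+1)`-subsets of the `(2j+1)`-element set
  `{i | i < x}`. Each member has `j + 1` subsets of size `j`, and each `j`-set lies in at most
  `j + 1` members, so double counting gives `|𝒞| ≤ |∂𝒞|` (`card_le_card_shadow_of_subset`).
* Otherwise `𝒞` contains all `(j+1)`-subsets of `{i | i < x}`. Since `ξ_{j+1} ≤ C(2j+2, j+1)`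
  (`xi_le`), its remaining members are of the form `insert x B` with `B ⊆ {i | i < x}`. The family
  `𝒟` of these `B` has at most `ξ_j` members, so `|𝒟| ≤ |∂𝒟|` by induction, while `∂𝒞` contains
  all `C(2j+1, j) = C(2j+1, j+1)` of the `j`-subsets of `{i | i < x}`, together with the sets
  `insert x B'` for `B' ∈ ∂𝒟` (`step_large`).
-/

open Finset

/-- The number `ξ_k = ∑_{j=1}^k C(2j-1, j)`. -/
def xi (k : ℕ) : ℕ := ∑ j ∈ Finset.Icc 1 k, Nat.choose (2 * j - 1) j

lemma xi_succ (j : ℕ) : xi (j + 1) = (2 * j + 1).choose (j + 1) + xi j := by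
  unfold xi
  rw [Finset.sum_Icc_succ_top (by omega), add_comm]
  rfl

lemma choose_middle (j : ℕ) : (2 * j + 1).choose j = (2 * j + 1).choose (j + 1) :=
  Nat.choose_symm_of_eq_add (by omega)

lemma choose_even (j : ℕ) : (2 * j + 2).choose (j + 1) = 2 * (2 * j + 1).choose (j + 1) := by
  rw [Nat.choose_succ_succ, choose_middle]
  ring

lemma xi_le (j : ℕ) : xi j ≤ (2 * j + 1).choose (j + 1) := by
  induction j with
  | zero => simp [xi]
  | succ j ih =>
    rw [xi_succ]
    have h1 := choose_even j
    have h2 : (2 * (j + 1) + 1).choose (j + 1 + 1)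
        = (2 * j + 2).choose (j + 1) + (2 * j + 2).choose (j + 2) := Nat.choose_succ_succ _ _
    omega

/-- Double counting inside a ground set of size `2j + 1`: the two middle layers have equal size, so
the shadow of a family in the upper one is at least as large as the family. -/
lemma card_le_card_shadow_of_subset_s3 {α : Type*} [DecidableEq α] {j : ℕ} {S : Finset α}
    (hS : #S = 2 * j + 1) {𝒞 : Finset (Finset α)} (h𝒞 : 𝒞 ⊆ powersetCard (j + 1) S) :
    #𝒞 ≤ #𝒞.shadow := by
  refine Nat.le_of_mul_le_mul_right (c := j + 1) ?_ (Nat.succ_pos j)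
  refine card_mul_le_card_mul' (fun t s => t ⊆ s) (fun s hs => ?_) (fun t ht => ?_)
  · have hsc := (mem_powersetCard.1 (h𝒞 hs)).2
    rw [← hsc, ← card_image_of_injOn s.erase_injOn]
    refine card_le_card fun t ht => ?_
    obtain ⟨a, ha, rfl⟩ := mem_image.1 ht
    exact (mem_bipartiteBelow _).2 ⟨erase_mem_shadow hs ha, erase_subset _ _⟩
  · obtain ⟨s₀, hs₀, a, ha, rfl⟩ := mem_shadow_iff.1 ht
    obtain ⟨hsub, hc⟩ := mem_powersetCard.1 (h𝒞 hs₀)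
    set t := s₀.erase a with htdef
    have htc : #t = j := by rw [htdef, card_erase_of_mem ha, hc]; rfl
    have htS : t ⊆ S := (erase_subset _ _).trans hsub
    have : #(S \ t) = j + 1 := by rw [card_sdiff_of_subset htS]; omega
    rw [← this]
    refine (card_le_card fun s hs => ?_).trans (card_image_le (f := fun b => insert b t))
    obtain ⟨hs𝒞, hts⟩ := (mem_bipartiteAbove _).1 hs
    obtain ⟨hsS, hsc⟩ := mem_powersetCard.1 (h𝒞 hs𝒞)
    have h1 : #(s \ t) = 1 := by rw [card_sdiff_of_subset hts]; omega
    obtain ⟨b, hb⟩ := card_eq_one.1 h1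
    have hbm : b ∈ s \ t := by simp [hb]
    refine mem_image.2 ⟨b, mem_sdiff.2 ⟨hsS (mem_sdiff.1 hbm).1, (mem_sdiff.1 hbm).2⟩, ?_⟩
    rw [insert_eq, ← hb, sdiff_union_of_subset hts]

lemma exists_isInitSeg {N r : ℕ} (m : ℕ) (hm : m ≤ N.choose r) :
    ∃ 𝒞 : Finset (Finset (Fin N)), Colex.IsInitSeg 𝒞 r ∧ #𝒞 = m := by
  induction m with
  | zero => exact ⟨∅, Colex.isInitSeg_empty, rfl⟩
  | succ m ih =>
    obtain ⟨𝒞, h𝒞, hc⟩ := ih (by omega)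
    -- The colex-least `r`-set outside `𝒞` extends the segment by one.
    have hne : (powersetCard r (univ : Finset (Fin N)) \ 𝒞).Nonempty := by
      rw [← card_pos]
      have := le_card_sdiff 𝒞 (powersetCard r (univ : Finset (Fin N)))
      simp only [card_powersetCard, card_univ, Fintype.card_fin] at this
      omega
    obtain ⟨s, hs, hmin⟩ := exists_min_image _ (fun s => toColex s) hne
    simp only [mem_sdiff, mem_powersetCard, subset_univ, true_and] at hs hmin
    refine ⟨insert s 𝒞, ⟨?_, ?_⟩, by rw [card_insert_of_notMem hs.2, hc]⟩
    · intro t ht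
      rcases mem_insert.1 (mem_coe.1 ht) with rfl | ht
      · exact hs.1
      · exact h𝒞.1 ht
    · rintro u t hu ⟨htu, htr⟩
      rcases mem_insert.1 hu with rfl | hu
      · by_contra hcon
        exact absurd (hmin t ⟨htr, fun h => hcon (mem_insert_of_mem h)⟩) (not_le.2 htu)
      · exact mem_insert_of_mem (h𝒞.2 hu ⟨htu, htr⟩)

lemma isInitSeg_Iio {N : ℕ} (r : ℕ) (x : Fin N) :
    Colex.IsInitSeg (powersetCard r (Iio x)) r := by
  refine ⟨Set.sized_powersetCard _ _, ?_⟩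
  rintro s t hs ⟨hts, ht⟩
  refine mem_powersetCard.2 ⟨fun b hb => mem_Iio.2 ?_, ht⟩
  exact Colex.forall_lt_mono hts.le (fun c hc => mem_Iio.1 ((mem_powersetCard.1 hs).1 hc)) b hb

lemma isInitSeg_Iic {N : ℕ} (r : ℕ) (x : Fin N) :
    Colex.IsInitSeg (powersetCard r (Iic x)) r := by
  refine ⟨Set.sized_powersetCard _ _, ?_⟩
  rintro s t hs ⟨hts, ht⟩
  refine mem_powersetCard.2 ⟨fun b hb => mem_Iic.2 ?_, ht⟩
  exact Colex.forall_le_mono hts.le (fun c hc => mem_Iic.1 ((mem_powersetCard.1 hs).1 hc)) b hb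

lemma subset_of_isInitSeg {N r : ℕ} {𝒞 𝒟 : Finset (Finset (Fin N))} (h𝒞 : Colex.IsInitSeg 𝒞 r)
    (h𝒟 : Colex.IsInitSeg 𝒟 r) (h : #𝒞 ≤ #𝒟) : 𝒞 ⊆ 𝒟 := by
  rcases h𝒞.total h𝒟 with h' | h'
  · exact h'
  · exact (eq_of_subset_of_card_le h' h).ge

/-- The step for a family lying between all `(j+1)`-subsets of `{i | i < x}` and all `(j+1)`-subsets
of `{i | i ≤ x}`, where `x = 2j + 1`: the members containing `x` are handled by the hypothesis `ih`
on families of `j`-sets. -/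
lemma step_large {N j : ℕ} (x : Fin N) (hx : (x : ℕ) = 2 * j + 1)
    (ih : ∀ 𝒟 : Finset (Finset (Fin N)), (𝒟 : Set (Finset (Fin N))).Sized j → #𝒟 ≤ xi j →
      #𝒟 ≤ #𝒟.shadow)
    {𝒞 : Finset (Finset (Fin N))} (hlow : powersetCard (j + 1) (Iio x) ⊆ 𝒞)
    (hup : 𝒞 ⊆ powersetCard (j + 1) (Iic x)) (hcard : #𝒞 ≤ xi (j + 1)) :
    #𝒞 ≤ #𝒞.shadow := by
  set 𝒟 := {s ∈ 𝒞 | x ∈ s}.image (fun s => s.erase x) with h𝒟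
  have hmem : ∀ B ∈ 𝒟, x ∉ B ∧ insert x B ∈ 𝒞 ∧ #B = j := by
    intro B hB
    obtain ⟨s, hs, rfl⟩ := mem_image.1 hB
    obtain ⟨hs, hxs⟩ := mem_filter.1 hs
    refine ⟨notMem_erase _ _, by rwa [insert_erase hxs], ?_⟩
    rw [card_erase_of_mem hxs, (mem_powersetCard.1 (hup hs)).2]
    rfl
  have h𝒟card : #𝒟 = #{s ∈ 𝒞 | x ∈ s} := by
    refine card_image_of_injOn fun s hs t ht hst => ?_
    have hs' := (mem_filter.1 (mem_coe.1 hs)).2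
    have ht' := (mem_filter.1 (mem_coe.1 ht)).2
    rw [← insert_erase hs', ← insert_erase ht']
    exact congrArg (insert x) hst
  have hP : {s ∈ 𝒞 | x ∉ s} = powersetCard (j + 1) (Iio x) := by
    ext s
    rw [mem_filter]
    constructor
    · rintro ⟨hs, hxs⟩
      obtain ⟨h1, h2⟩ := mem_powersetCard.1 (hup hs)
      refine mem_powersetCard.2 ⟨fun b hb => mem_Iio.2 ?_, h2⟩
      exact lt_of_le_of_ne (mem_Iic.1 (h1 hb)) (fun h => hxs (h ▸ hb))
    · intro hs
      exact ⟨hlow hs, fun hxs => lt_irrefl x (mem_Iio.1 ((mem_powersetCard.1 hs).1 hxs))⟩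
  have hsplit : #𝒞 = #𝒟 + (2 * j + 1).choose (j + 1) := by
    rw [← card_filter_add_card_filter_not (s := 𝒞) (fun s => x ∈ s), hP, h𝒟card]
    simp [hx]
  have hD := ih 𝒟 (fun B hB => (hmem B hB).2.2) (by rw [xi_succ] at hcard; omega)
  have hxD : ∀ B ∈ 𝒟.shadow, x ∉ B := by
    intro B hB hxB
    obtain ⟨s, hs, a, -, rfl⟩ := mem_shadow_iff.1 hB
    exact (hmem s hs).1 (mem_of_mem_erase hxB)
  have himg : #(𝒟.shadow.image (insert x)) = #𝒟.shadow := by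
    refine card_image_of_injOn fun s hs t ht hst => ?_
    rw [← erase_insert (hxD s hs), ← erase_insert (hxD t ht)]
    exact congrArg (fun u => u.erase x) hst
  have hdisj : Disjoint (𝒟.shadow.image (insert x)) (powersetCard j (Iio x)) := by
    rw [disjoint_left]
    intro s hs hs'
    obtain ⟨B, -, rfl⟩ := mem_image.1 hs
    exact lt_irrefl x (mem_Iio.1 ((mem_powersetCard.1 hs').1 (mem_insert_self x B)))
  have hsub : 𝒟.shadow.image (insert x) ∪ powersetCard j (Iio x) ⊆ 𝒞.shadow := by
    refine union_subset (fun s hs => ?_) (fun t ht => ?_)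
    · obtain ⟨B, hB, rfl⟩ := mem_image.1 hs
      obtain ⟨a, ha, haB⟩ := mem_shadow_iff_insert_mem.1 hB
      have hax : a ≠ x := fun h => (hmem _ haB).1 (h ▸ mem_insert_self a B)
      refine mem_shadow_iff_insert_mem.2 ⟨a, by simp [hax, ha], ?_⟩
      rw [insert_comm]
      exact (hmem _ haB).2.1
    · obtain ⟨h1, h2⟩ := mem_powersetCard.1 ht
      obtain ⟨a, ha, hat⟩ := exists_mem_notMem_of_card_lt_card
        (show #t < #(Iio x) by rw [Fin.card_Iio, hx]; omega)
      refine mem_shadow_iff_insert_mem.2 ⟨a, hat, hlow (mem_powersetCard.2 ⟨?_, ?_⟩)⟩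
      · exact insert_subset ha h1
      · rw [card_insert_of_notMem hat, h2]
  have hfin := card_le_card hsub
  rw [card_union_of_disjoint hdisj, himg, card_powersetCard, Fin.card_Iio, hx, choose_middle]
    at hfin
  omega

lemma card_le_card_shadow_fin {N : ℕ} (k : ℕ) (hN : 2 * k ≤ N) (𝒜 : Finset (Finset (Fin N)))
    (h𝒜 : (𝒜 : Set (Finset (Fin N))).Sized k) (hcard : #𝒜 ≤ xi k) : #𝒜 ≤ #𝒜.shadow := by
  induction k generalizing 𝒜 with
  | zero =>
    have : #𝒜 = 0 := by simpa [xi] using hcard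
    omega
  | succ j ih =>
    obtain ⟨𝒞, h𝒞, hc⟩ := exists_isInitSeg (N := N) (r := j + 1) #𝒜
      (by simpa using h𝒜.card_le)
    have hkk : #𝒞.shadow ≤ #𝒜.shadow := kruskal_katona h𝒜 hc.le h𝒞
    rw [← hc] at hcard ⊢
    refine le_trans ?_ hkk
    let x : Fin N := ⟨2 * j + 1, by omega⟩
    have hx : (x : ℕ) = 2 * j + 1 := rfl
    rcases h𝒞.total (isInitSeg_Iio (j + 1) x) with h | h
    · exact card_le_card_shadow_of_subset_s3 (by rw [Fin.card_Iio]) h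
    · refine step_large x hx (fun 𝒟 h1 h2 => ih (by omega) 𝒟 h1 h2) h ?_ hcard
      refine subset_of_isInitSeg h𝒞 (isInitSeg_Iic (j + 1) x) ?_
      rw [card_powersetCard, Fin.card_Iic, hx, choose_even]
      have := xi_le j
      rw [xi_succ] at hcard
      omega

/-- If `𝒜` is a finite family of `k`-element finite subsets of `ℕ` with
`|𝒜| ≤ ξ_k = ∑_{j=1}^k C(2j-1, j)`, then the shadow satisfies `|∂𝒜| ≥ |𝒜|`. -/
theorem stmt_3 (k : ℕ) (hk : 1 ≤ k) (𝒜 : Finset (Finset ℕ))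
    (h𝒜 : ∀ s ∈ 𝒜, s.card = k)
    (hcard : 𝒜.card ≤ ∑ j ∈ Finset.Icc 1 k, Nat.choose (2 * j - 1) j) :
    𝒜.card ≤ 𝒜.shadow.card := by
  -- All members of `𝒜` live in `{0, …, N - 1}`, so `𝒜` transfers to a family `ℬ` on `Fin N`.
  obtain ⟨M, hM⟩ := (𝒜.biUnion id).exists_nat_subset_range
  let N := M + 2 * k
  let e : Finset (Fin N) ↪ Finset ℕ := (Finset.mapEmbedding Fin.valEmbedding).toEmbedding
  have he : ∀ s, e s = s.map Fin.valEmbedding := fun s => rfl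
  let ℬ : Finset (Finset (Fin N)) := {s | e s ∈ 𝒜}
  have hmemℬ : ∀ s, s ∈ ℬ ↔ e s ∈ 𝒜 := fun s => by simp [ℬ]
  have hℬ : ℬ.map e = 𝒜 := by
    ext s
    simp only [mem_map, hmemℬ]
    constructor
    · rintro ⟨t, ht, rfl⟩
      exact ht
    · intro hs
      have hlt : ∀ b ∈ s, b < N := fun b hb => by
        have := mem_range.1 (hM (mem_biUnion.2 ⟨s, hs, hb⟩))
        omega
      have : e (s.attachFin hlt) = s := by rw [he, map_valEmbedding_attachFin]
      exact ⟨s.attachFin hlt, by rwa [this], this⟩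
  have hshadow : ℬ.shadow.map e ⊆ 𝒜.shadow := by
    intro s hs
    obtain ⟨t, ht, rfl⟩ := mem_map.1 hs
    obtain ⟨a, ha, hat⟩ := mem_shadow_iff_insert_mem.1 ht
    refine mem_shadow_iff_insert_mem.2 ⟨a, ?_, ?_⟩
    · rw [he]
      simpa [Fin.val_inj] using ha
    · rw [hmemℬ, he, map_insert] at hat
      exact hat
  have hc : #ℬ = #𝒜 := by rw [← hℬ, card_map]
  have key := card_le_card_shadow_fin k (by omega) ℬ
    (fun s hs => by simpa [he] using h𝒜 _ ((hmemℬ s).1 hs)) (by rw [hc]; exact hcard)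
  rw [hc] at key
  calc #𝒜 ≤ #ℬ.shadow := key
    _ = #(ℬ.shadow.map e) := (card_map _).symm
    _ ≤ _ := card_le_card hshadow
end

section
/- Let δ ≥ 1 and let 𝒜 be a finite family of δ-element subsets of a finite set with |𝒜| = ξ_δ + 1, where ξ_δ := Σ_{j=1}^{δ} C(2j-1, j). If |∂𝒜| ≥ |𝒜|, then 𝒜 is uniformly collapsible. -/
/-!
By Hall's theorem, `𝒜` is uniformly collapsible as soon as `|ℬ| ≤ |∂ℬ|` for every subfamily
`ℬ ⊆ 𝒜`. For `ℬ = 𝒜` this is the hypothesis, and every proper subfamily has at most `ξ_δ` members,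
so the theorem reduces to the following: *a `k`-uniform family with at most `ξ_k` members has a
shadow at least as large as itself* (`card_le_card_shadow_fin`).

That claim is proved by induction on `k`. By Kruskal–Katona, the family may be taken to be an
initial segment `𝒞` of the colexicographic order. Let `S` consist of the first `2k - 1` points.
Initial segments are nested, so one of two cases occurs.
* All members of `𝒞` lie in `S`. Each member has `k` shadow sets below it, and each `(k-1)`-set lies
  in at most `|S| - (k - 1) = k` members (`card_le_card_shadow_of_subset`, a local LYM inequality).
* `𝒞` contains all `k`-subsets of `S`. As `ξ_k < C(2k, k)`, all members of `𝒞` lie in `S ∪ {v}`,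
  where `v` is the next point. The members containing `v`, with `v` removed, form a `(k-1)`-uniform
  family with at most `ξ_k - C(2k-1, k) = ξ_{k-1}` members, to which the induction hypothesis
  applies; the remaining members contribute all `C(2k-1, k-1) = C(2k-1, k)` subsets of `S` of size
  `k - 1` to the shadow.
-/

/-- A family `𝒜` of `k`-element finite sets is uniformly collapsible if there is an
injective map `f` on `𝒜` with `f F` a `(k-1)`-element subset of `F` for each `F ∈ 𝒜`. -/
def UniformlyCollapsible {α : Type*} [DecidableEq α] (k : ℕ) (𝒜 : Finset (Finset α)) : Prop :=
  ∃ f : Finset α → Finset α, Set.InjOn f ↑𝒜 ∧ ∀ F ∈ 𝒜, f F ⊆ F ∧ (f F).card = k - 1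

namespace Collapse

open Finset
open Finset.Colex
open scoped FinsetFamily

/-- The number `ξ_k = ∑_{j=1}^k C(2j-1, j)`. -/
def xi (k : ℕ) : ℕ := ∑ j ∈ Icc 1 k, Nat.choose (2 * j - 1) j

lemma xi_succ (k : ℕ) : xi (k + 1) = xi k + Nat.choose (2 * k + 1) (k + 1) := by
  unfold xi
  rw [sum_Icc_succ_top (by omega)]
  rfl

lemma xi_lt (k : ℕ) : xi k < Nat.choose (2 * k) k := by
  induction k with
  | zero => simp [xi]
  | succ k ih =>
    have h1 : Nat.choose (2 * (k + 1)) (k + 1)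
        = Nat.choose (2 * k + 1) k + Nat.choose (2 * k + 1) (k + 1) :=
      Nat.choose_succ_succ' (2 * k + 1) k
    have h2 : Nat.choose (2 * k) k ≤ Nat.choose (2 * k + 1) k :=
      Nat.choose_le_choose k (by omega)
    rw [xi_succ]
    omega

/-- A local LYM inequality relative to a ground set `S` of at most `2k + 1` points: inside `S`,
passing from `(k+1)`-sets to `k`-sets does not decrease cardinality. -/
lemma card_le_card_shadow_of_subset {α : Type*} [DecidableEq α] {k : ℕ} {S : Finset α}
    (hS : #S ≤ 2 * k + 1) {𝒜 : Finset (Finset α)} (h𝒜 : 𝒜 ⊆ powersetCard (k + 1) S) :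
    #𝒜 ≤ #(∂ 𝒜) := by
  have key : #𝒜 * (k + 1) ≤ #(∂ 𝒜) * (k + 1) := by
    refine card_mul_le_card_mul' (· ⊆ ·) (fun s hs => ?_) (fun t ht => ?_)
    · rw [← (mem_powersetCard.1 (h𝒜 hs)).2, ← card_image_of_injOn s.erase_injOn]
      refine card_le_card ?_
      simp_rw [image_subset_iff, mem_bipartiteBelow]
      exact fun a ha => ⟨erase_mem_shadow hs ha, erase_subset _ _⟩
    · obtain ⟨s, hs, hts, hst⟩ := mem_shadow_iff_exists_mem_card_add_one.1 ht
      have hs' := mem_powersetCard.1 (h𝒜 hs)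
      have htk : #t = k := by omega
      have hsub : 𝒜.bipartiteAbove (· ⊆ ·) t ⊆ (S \ t).image (fun a => insert a t) := by
        intro u hu
        rw [mem_bipartiteAbove] at hu
        have hu' := mem_powersetCard.1 (h𝒜 hu.1)
        obtain ⟨a, ha, rfl⟩ := exists_eq_insert_iff.2 ⟨hu.2, by omega⟩
        exact mem_image.2 ⟨a, mem_sdiff.2 ⟨hu'.1 (mem_insert_self _ _), ha⟩, rfl⟩
      have h1 := (card_le_card hsub).trans card_image_le
      rw [card_sdiff_of_subset (hts.trans hs'.1)] at h1
      omega
  exact Nat.le_of_mul_le_mul_right key (by omega)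

lemma exists_isInitSeg {n r : ℕ} (m : ℕ)
    (hm : m ≤ #(powersetCard r (univ : Finset (Fin n)))) :
    ∃ 𝒞 : Finset (Finset (Fin n)), IsInitSeg 𝒞 r ∧ #𝒞 = m := by
  induction m with
  | zero => exact ⟨∅, isInitSeg_empty, rfl⟩
  | succ m ih =>
    obtain ⟨𝒞, h𝒞, hcard⟩ := ih (by omega)
    -- Adjoin the colex-least `r`-set outside the segment of size `m`.
    have hne : (powersetCard r (univ : Finset (Fin n)) \ 𝒞).Nonempty := by
      rw [sdiff_nonempty]
      intro h
      have := card_le_card h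
      omega
    obtain ⟨s, hs, hmin⟩ := exists_min_image _ (fun s : Finset (Fin n) => toColex s) hne
    simp only [mem_sdiff, mem_powersetCard, subset_univ, true_and] at hs hmin
    refine ⟨insert s 𝒞, ⟨?_, ?_⟩, by rw [card_insert_of_notMem hs.2, hcard]⟩
    · intro t ht
      rw [mem_coe, mem_insert] at ht
      obtain rfl | ht := ht
      · exact hs.1
      · exact h𝒞.1 ht
    · rintro u t hu ⟨htu, ht⟩
      rw [mem_insert] at hu
      by_contra hcon
      rw [mem_insert, not_or] at hcon
      obtain rfl | hu := hu
      · exact absurd htu (not_lt.2 (hmin t ⟨ht, hcon.2⟩))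
      · exact hcon.2 (h𝒞.2 hu ⟨htu, ht⟩)

/-- The first `N` points of `Fin n` (all of them if `n ≤ N`). -/
def firstPoints (n N : ℕ) : Finset (Fin n) := univ.filter (fun x => x.val < N)

lemma mem_firstPoints {n N : ℕ} {x : Fin n} : x ∈ firstPoints n N ↔ x.val < N := by
  simp [firstPoints]

lemma card_firstPoints (n N : ℕ) : #(firstPoints n N) = min n N := by
  exact Fin.card_filter_val_lt

lemma isInitSeg_powersetCard_firstPoints (n N r : ℕ) :
    IsInitSeg (powersetCard r (firstPoints n N)) r := by
  refine ⟨Set.sized_powersetCard _ _, ?_⟩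
  rintro s t hs ⟨hts, ht⟩
  rw [mem_powersetCard] at hs ⊢
  refine ⟨fun x hx => ?_, ht⟩
  by_cases hxs : x ∈ s
  · exact hs.1 hxs
  · obtain ⟨b, hb, -, hxb⟩ := toColex_le_toColex.1 hts.le hx hxs
    have := mem_firstPoints.1 (hs.1 hb)
    exact mem_firstPoints.2 (lt_of_le_of_lt hxb this)

/-- The inductive step when the family contains every `(k+1)`-subset of a `(2k+1)`-set `S` and is
contained in the `(k+1)`-subsets of `S ∪ {v}`. -/
lemma card_le_card_shadow_of_insert {α : Type*} [DecidableEq α] {k : ℕ} {S : Finset α} {v : α}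
    (hv : v ∉ S) (hS : #S = 2 * k + 1) {𝒞 : Finset (Finset α)}
    (hsub : powersetCard (k + 1) S ⊆ 𝒞) (hsup : 𝒞 ⊆ powersetCard (k + 1) (insert v S))
    (hcard : #𝒞 ≤ xi (k + 1))
    (ih : ∀ ℬ : Finset (Finset α), (ℬ : Set (Finset α)).Sized k → #ℬ ≤ xi k → #ℬ ≤ #(∂ ℬ)) :
    #𝒞 ≤ #(∂ 𝒞) := by
  have hnon : #(𝒞.nonMemberSubfamily v) = Nat.choose (2 * k + 1) (k + 1) := by
    rw [← hS, ← card_powersetCard]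
    congr 1
    ext s
    rw [mem_nonMemberSubfamily]
    constructor
    · rintro ⟨hs, hvs⟩
      have := mem_powersetCard.1 (hsup hs)
      exact mem_powersetCard.2 ⟨(subset_insert_iff_of_notMem hvs).1 this.1, this.2⟩
    · intro hs
      exact ⟨hsub hs, fun h => hv ((mem_powersetCard.1 hs).1 h)⟩
  have hsplit := card_memberSubfamily_add_card_nonMemberSubfamily v 𝒞
  have hsplit' := card_memberSubfamily_add_card_nonMemberSubfamily v (∂ 𝒞)
  have hsized : ((𝒞.memberSubfamily v : Finset (Finset α)) : Set (Finset α)).Sized k := by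
    intro s hs
    rw [mem_coe, mem_memberSubfamily] at hs
    have := (mem_powersetCard.1 (hsup hs.1)).2
    rw [card_insert_of_notMem hs.2] at this
    omega
  rw [xi_succ] at hcard
  have h1 := ih _ hsized (by omega)
  have h2 : ∂ (𝒞.memberSubfamily v) ⊆ (∂ 𝒞).memberSubfamily v := by
    intro t ht
    obtain ⟨a, hat, ha⟩ := mem_shadow_iff_insert_mem.1 ht
    rw [mem_memberSubfamily, mem_insert, not_or] at ha
    refine mem_memberSubfamily.2 ⟨mem_shadow_iff_insert_mem.2 ⟨a, ?_, ?_⟩, ha.2.2⟩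
    · rw [mem_insert, not_or]
      exact ⟨fun h => ha.2.1 h.symm, hat⟩
    · rw [insert_comm]
      exact ha.1
  have h3 : powersetCard k S ⊆ (∂ 𝒞).nonMemberSubfamily v := by
    intro t ht
    rw [mem_powersetCard] at ht
    have hne : (S \ t).Nonempty := by
      rw [sdiff_nonempty]
      intro h
      have := card_le_card h
      omega
    obtain ⟨a, ha⟩ := hne
    rw [mem_sdiff] at ha
    refine mem_nonMemberSubfamily.2 ⟨mem_shadow_iff_insert_mem.2 ⟨a, ha.2, hsub ?_⟩,
      fun h => hv (ht.1 h)⟩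
    exact mem_powersetCard.2 ⟨insert_subset ha.1 ht.1, by rw [card_insert_of_notMem ha.2, ht.2]⟩
  have h2' := card_le_card h2
  have h3' := card_le_card h3
  rw [card_powersetCard, hS] at h3'
  have hsymm : Nat.choose (2 * k + 1) (k + 1) = Nat.choose (2 * k + 1) k :=
    Nat.choose_symm_half k
  omega

/-- A `k`-uniform family with at most `ξ_k` members is no larger than its shadow. -/
lemma card_le_card_shadow_fin {n : ℕ} (k : ℕ) (𝒜 : Finset (Finset (Fin n)))
    (h𝒜 : (𝒜 : Set (Finset (Fin n))).Sized k) (hcard : #𝒜 ≤ xi k) : #𝒜 ≤ #(∂ 𝒜) := by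
  induction k generalizing 𝒜 with
  | zero =>
    have : xi 0 = 0 := by simp [xi]
    omega
  | succ k ih =>
    obtain ⟨𝒞, h𝒞, h𝒞𝒜⟩ := exists_isInitSeg (n := n) (r := k + 1) #𝒜
      (card_le_card fun s hs => mem_powersetCard.2 ⟨subset_univ _, h𝒜 hs⟩)
    refine le_trans ?_ (kruskal_katona h𝒜 h𝒞𝒜.le h𝒞)
    rw [← h𝒞𝒜] at hcard ⊢
    by_cases hsmall : 𝒞 ⊆ powersetCard (k + 1) (firstPoints n (2 * k + 1))
    · refine card_le_card_shadow_of_subset ?_ hsmall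
      rw [card_firstPoints]
      exact min_le_right _ _
    have hsub := (h𝒞.total (isInitSeg_powersetCard_firstPoints n (2 * k + 1) (k + 1))).resolve_left
      hsmall
    -- A member of `𝒞` outside the first `2k + 1` points shows that `Fin n` has a further point `v`.
    have hn : 2 * k + 1 < n := by
      by_contra hn
      refine hsmall fun s hs => mem_powersetCard.2 ⟨fun x _ => mem_firstPoints.2 ?_, h𝒞.1 hs⟩
      have := x.isLt
      omega
    have hsup : 𝒞 ⊆ powersetCard (k + 1) (firstPoints n (2 * (k + 1))) := by
      refine (h𝒞.total (isInitSeg_powersetCard_firstPoints n _ (k + 1))).resolve_right fun h => ?_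
      have h1 := card_le_card h
      rw [card_powersetCard, card_firstPoints, min_eq_right (by omega)] at h1
      have := xi_lt (k + 1)
      omega
    have hins : firstPoints n (2 * (k + 1))
        = insert (⟨2 * k + 1, hn⟩ : Fin n) (firstPoints n (2 * k + 1)) := by
      ext x
      rw [mem_insert, mem_firstPoints, mem_firstPoints, Fin.ext_iff]
      dsimp only
      omega
    rw [hins] at hsup
    refine card_le_card_shadow_of_insert ?_ ?_ hsub hsup hcard ih
    · simp [mem_firstPoints]
    · rw [card_firstPoints]
      omega

/-- Transfer of `card_le_card_shadow_fin` to an arbitrary finite ground set. -/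
lemma card_le_card_shadow {α : Type*} [DecidableEq α] [Fintype α] (k : ℕ) (𝒜 : Finset (Finset α))
    (h𝒜 : (𝒜 : Set (Finset α)).Sized k) (hcard : #𝒜 ≤ xi k) : #𝒜 ≤ #(∂ 𝒜) := by
  let e := Fintype.equivFin α
  have hinj : Function.Injective (fun s : Finset α => s.image e) := image_injective e.injective
  have h1 : #(𝒜.image fun s => s.image e) = #𝒜 := card_image_of_injective _ hinj
  have h2 : ∂ (𝒜.image fun s => s.image e) ⊆ (∂ 𝒜).image fun s => s.image e := by
    intro t ht
    obtain ⟨_, hs', _, ha', rfl⟩ := mem_shadow_iff.1 ht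
    obtain ⟨s, hs, rfl⟩ := mem_image.1 hs'
    obtain ⟨a, ha, rfl⟩ := mem_image.1 ha'
    exact mem_image.2 ⟨s.erase a, erase_mem_shadow hs ha, image_erase e.injective _ _⟩
  have h3 := card_le_card_shadow_fin k (𝒜.image fun s => s.image e) (by
    intro t ht
    obtain ⟨s, hs, rfl⟩ := mem_image.1 (mem_coe.1 ht)
    rw [card_image_of_injective _ e.injective]
    exact h𝒜 hs) (by omega)
  have h4 := (card_le_card h2).trans card_image_le
  omega

/-- Hall's theorem for the relation between the members of a family and its shadow. -/
lemma uniformlyCollapsible_of_hall {α : Type*} [DecidableEq α] {k : ℕ} {𝒜 : Finset (Finset α)}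
    (h𝒜 : (𝒜 : Set (Finset α)).Sized k) (hall : ∀ ℬ ⊆ 𝒜, #ℬ ≤ #(∂ ℬ)) :
    UniformlyCollapsible k 𝒜 := by
  obtain ⟨f, hf, hmem⟩ := (all_card_le_biUnion_card_iff_exists_injective
    (fun F : {F // F ∈ 𝒜} => ∂ ({F.1} : Finset (Finset α)))).1 (by
      intro s
      have h1 := hall (s.map (Function.Embedding.subtype _)) (fun F hF => by
        obtain ⟨G, -, rfl⟩ := mem_map.1 hF
        exact G.2)
      rw [card_map] at h1
      refine h1.trans (card_le_card fun t ht => ?_)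
      obtain ⟨F, hF, a, ha, rfl⟩ := mem_shadow_iff.1 ht
      obtain ⟨G, hG, rfl⟩ := mem_map.1 hF
      exact mem_biUnion.2 ⟨G, hG, erase_mem_shadow (mem_singleton_self _) ha⟩)
  refine ⟨fun F => if h : F ∈ 𝒜 then f ⟨F, h⟩ else ∅, ?_, ?_⟩
  · intro F hF G hG hFG
    rw [mem_coe] at hF hG
    simp only [hF, hG, dif_pos] at hFG
    exact congrArg Subtype.val (hf hFG)
  · intro F hF
    simp only [hF, dif_pos]
    obtain ⟨G, hG, a, ha, hGa⟩ := mem_shadow_iff.1 (hmem ⟨F, hF⟩)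
    rw [mem_singleton] at hG
    subst hG
    rw [← hGa]
    exact ⟨erase_subset _ _, by rw [card_erase_of_mem ha, h𝒜 hF]⟩

end Collapse

/-- If `𝒜` is a `δ`-uniform family with `|𝒜| = ξ_δ + 1` and `|∂𝒜| ≥ |𝒜|`, then `𝒜`
is uniformly collapsible. -/
theorem stmt_6 {α : Type*} [DecidableEq α] [Fintype α] (δ : ℕ) (hδ : 1 ≤ δ)
    (𝒜 : Finset (Finset α)) (h𝒜 : ∀ s ∈ 𝒜, s.card = δ)
    (hcard : 𝒜.card = (∑ j ∈ Finset.Icc 1 δ, Nat.choose (2 * j - 1) j) + 1)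
    (hsh : 𝒜.card ≤ 𝒜.shadow.card) :
    UniformlyCollapsible δ 𝒜 := by
  refine Collapse.uniformlyCollapsible_of_hall (fun s hs => h𝒜 s hs) fun ℬ hℬ => ?_
  obtain rfl | hne := eq_or_ne ℬ 𝒜
  · exact hsh
  · have hlt := Finset.card_lt_card (hℬ.ssubset_of_ne hne)
    rw [hcard] at hlt
    exact Collapse.card_le_card_shadow δ ℬ (fun s hs => h𝒜 s (hℬ hs)) (Nat.lt_succ_iff.1 hlt)
end

section
/- Let δ ≥ 1 and n ≥ 2δ. Then there exists a family 𝒜 of exactly ξ_δ + 1 distinct δ-element subsets of [n] = {1,…,n} whose shadow satisfies |∂𝒜| = ξ_δ; in particular |∂𝒜| < |𝒜|, so 𝒜 is not uniformly collapsible. -/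
open Finset

/-- The sets `s ∈ 𝒜` themselves, obtained by deleting `a` from `insert a s`, contribute nothing new
to the shadow because they are `k`-subsets of `G`. -/
lemma shadow_powersetCard_union_image_insert {α : Type*} [DecidableEq α] {k : ℕ} {G : Finset α}
    {a : α} {𝒜 : Finset (Finset α)} (hG : k + 1 ≤ G.card) (ha : a ∉ G)
    (h𝒜 : ∀ s ∈ 𝒜, s.card = k ∧ s ⊆ G) :
    (powersetCard (k + 1) G ∪ 𝒜.image (insert a)).shadow =
      powersetCard k G ∪ 𝒜.shadow.image (insert a) := by
  ext t
  simp only [mem_union, mem_image, mem_powersetCard]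
  constructor
  · intro ht
    obtain ⟨s, hs, x, hx, rfl⟩ := mem_shadow_iff.1 ht
    simp only [mem_union, mem_image, mem_powersetCard] at hs
    rcases hs with ⟨hsG, hsc⟩ | ⟨s, hs, rfl⟩
    · left
      exact ⟨(erase_subset _ _).trans hsG, by rw [card_erase_of_mem hx, hsc]; rfl⟩
    · obtain ⟨hsc, hsG⟩ := h𝒜 s hs
      have has : a ∉ s := fun h => ha (hsG h)
      by_cases hxa : x = a
      · subst hxa
        left
        rw [erase_insert has]
        exact ⟨hsG, hsc⟩
      · right
        have hxs : x ∈ s := (mem_insert.1 hx).resolve_left hxa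
        exact ⟨s.erase x, erase_mem_shadow hs hxs, (erase_insert_of_ne (Ne.symm hxa)).symm⟩
  · rintro (⟨htG, htc⟩ | ⟨t, ht, rfl⟩)
    · have hlt : t.card < G.card := by omega
      obtain ⟨x, hxG, hxt⟩ := exists_mem_notMem_of_card_lt_card hlt
      refine mem_shadow_iff_insert_mem.2 ⟨x, hxt, ?_⟩
      simp only [mem_union, mem_powersetCard]
      left
      exact ⟨insert_subset hxG htG, by rw [card_insert_of_notMem hxt, htc]⟩
    · obtain ⟨s, hs, x, hx, rfl⟩ := mem_shadow_iff.1 ht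
      have hxa : a ≠ x := fun h => ha (h ▸ (h𝒜 s hs).2 hx)
      rw [← erase_insert_of_ne hxa]
      exact erase_mem_shadow (mem_union_right _ (mem_image_of_mem _ hs)) (mem_insert_of_mem hx)

lemma card_powersetCard_union_image_insert {α : Type*} [DecidableEq α] {k : ℕ} {G : Finset α}
    {a : α} {𝒜 : Finset (Finset α)} (ha : a ∉ G) (h𝒜 : ∀ s ∈ 𝒜, s ⊆ G) :
    (powersetCard k G ∪ 𝒜.image (insert a)).card = G.card.choose k + 𝒜.card := by
  rw [card_union_of_disjoint, card_powersetCard, card_image_of_injOn]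
  · intro s hs t ht hst
    have hs' : a ∉ s := fun h => ha (h𝒜 s hs h)
    have ht' : a ∉ t := fun h => ha (h𝒜 t ht h)
    rw [← erase_insert hs', ← erase_insert ht']
    exact congrArg (fun u => erase u a) hst
  · rw [disjoint_left]
    intro s hs hs'
    obtain ⟨t, -, rfl⟩ := mem_image.1 hs'
    exact ha ((mem_powersetCard.1 hs).1 (mem_insert_self a t))

/-- The recursive construction, with the support in the first `2k` points carried along as part of
the induction. -/
lemma exists_family (n k : ℕ) (hn : 2 * k ≤ n) :
    ∃ 𝒜 : Finset (Finset (Fin n)), (∀ s ∈ 𝒜, s.card = k ∧ ∀ x ∈ s, x.val < 2 * k) ∧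
      𝒜.card = (∑ j ∈ Icc 1 k, Nat.choose (2 * j - 1) j) + 1 ∧
      𝒜.shadow.card = ∑ j ∈ Icc 1 k, Nat.choose (2 * j - 1) j := by
  induction k with
  | zero => exact ⟨{∅}, by simp, by simp, by simp⟩
  | succ k ih =>
    obtain ⟨𝒜, h𝒜, hcard, hshadow⟩ := ih (by omega)
    let a : Fin n := ⟨2 * k + 1, by omega⟩
    let G : Finset (Fin n) := Iio a
    have hG : G.card = 2 * k + 1 := Fin.card_Iio a
    have hmemG : ∀ x : Fin n, x ∈ G ↔ x.val < 2 * k + 1 := fun x => by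
      simp [G, a, Fin.lt_def]
    have ha : a ∉ G := by simp [G]
    have hsub : ∀ s ∈ 𝒜, s ⊆ G := fun s hs x hx =>
      (hmemG x).2 (by have := (h𝒜 s hs).2 x hx; omega)
    have hsub' : ∀ t ∈ 𝒜.shadow, t ⊆ G := fun t ht => by
      obtain ⟨s, hs, hts⟩ := exists_subset_of_mem_shadow ht
      exact hts.trans (hsub s hs)
    have hsum : ∑ j ∈ Icc 1 (k + 1), Nat.choose (2 * j - 1) j =
        (∑ j ∈ Icc 1 k, Nat.choose (2 * j - 1) j) + (2 * k + 1).choose (k + 1) :=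
      sum_Icc_succ_top (by omega) _
    refine ⟨powersetCard (k + 1) G ∪ 𝒜.image (insert a), ?_, ?_, ?_⟩
    · intro s hs
      rcases mem_union.1 hs with hs | hs
      · obtain ⟨hsG, hsc⟩ := mem_powersetCard.1 hs
        exact ⟨hsc, fun x hx => by have := (hmemG x).1 (hsG hx); omega⟩
      · obtain ⟨s, hs', rfl⟩ := mem_image.1 hs
        refine ⟨?_, fun x hx => ?_⟩
        · rw [card_insert_of_notMem (fun h => ha (hsub s hs' h)), (h𝒜 s hs').1]
        · rcases mem_insert.1 hx with rfl | hx
          · show 2 * k + 1 < 2 * (k + 1)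
            omega
          · have := (h𝒜 s hs').2 x hx
            omega
    · rw [card_powersetCard_union_image_insert ha hsub, hG, hcard, hsum]
      omega
    · rw [shadow_powersetCard_union_image_insert (by omega) ha
        (fun s hs => ⟨(h𝒜 s hs).1, hsub s hs⟩),
        card_powersetCard_union_image_insert ha hsub', hG, hshadow, hsum,
        Nat.choose_symm_half, add_comm]

/-- For `δ ≥ 1` and `n ≥ 2δ`, there is a family `𝒜` of `ξ_δ + 1` distinct `δ`-element
subsets of `[n]` with `|∂𝒜| = ξ_δ < |𝒜|`; in particular `𝒜` is not uniformly collapsible. -/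
theorem stmt_7 (δ n : ℕ) (hδ : 1 ≤ δ) (hn : 2 * δ ≤ n) :
    ∃ 𝒜 : Finset (Finset (Fin n)), (∀ s ∈ 𝒜, s.card = δ) ∧
      𝒜.card = (∑ j ∈ Finset.Icc 1 δ, Nat.choose (2 * j - 1) j) + 1 ∧
      𝒜.shadow.card = ∑ j ∈ Finset.Icc 1 δ, Nat.choose (2 * j - 1) j ∧
      𝒜.shadow.card < 𝒜.card ∧
      ¬ UniformlyCollapsible δ 𝒜 := by
  obtain ⟨𝒜, h𝒜, hcard, hshadow⟩ := exists_family n δ hn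
  have hlt : 𝒜.shadow.card < 𝒜.card := by omega
  refine ⟨𝒜, fun s hs => (h𝒜 s hs).1, hcard, hshadow, hlt, ?_⟩
  rintro ⟨f, hinj, hf⟩
  refine hlt.not_ge (card_le_card_of_injOn f (fun F hF => ?_) hinj)
  obtain ⟨hsub, hfc⟩ := hf F hF
  have hFc := (h𝒜 F hF).1
  -- `δ ≥ 1` makes the truncated `δ - 1` the true predecessor.
  exact mem_shadow_iff_exists_mem_card_add_one.2 ⟨F, hF, hsub, by omega⟩
end

section
/- Let δ ≥ 3 and n ≥ 2δ. Then there exists a family 𝒜̃ of δ-element subsets of [n+δ-1] = {1,…,n+δ-1} with |𝒜̃| = ξ_δ + 2 and |∂𝒜̃| = ξ_δ + δ (so |∂𝒜̃| > |𝒜̃|), such that 𝒜̃ is not uniformly collapsible. -/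
/-- All `(k+1)`-subsets of `S`, together with the sets `insert a s` for `s ∈ A`. -/
def extendFamily {α : Type*} [DecidableEq α] (k : ℕ) (S : Finset α) (a : α)
    (A : Finset (Finset α)) : Finset (Finset α) :=
  S.powersetCard (k + 1) ∪ A.image (insert a)

lemma card_union_image_insert {α : Type*} [DecidableEq α] {m : ℕ} {S : Finset α} {a : α}
    (ha : a ∉ S) {A : Finset (Finset α)} (hA : ∀ s ∈ A, s ⊆ S) :
    (S.powersetCard m ∪ A.image (insert a)).card = S.card.choose m + A.card := by
  rw [Finset.card_union_of_disjoint, Finset.card_powersetCard, Finset.card_image_of_injOn]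
  · intro s hs t ht hst
    have h1 : a ∉ s := fun h => ha (hA s hs h)
    have h2 : a ∉ t := fun h => ha (hA t ht h)
    rw [← Finset.erase_insert h1, ← Finset.erase_insert h2]
    exact congrArg (fun u => Finset.erase u a) hst
  · rw [Finset.disjoint_left]
    intro s hs hs'
    obtain ⟨t, -, rfl⟩ := Finset.mem_image.1 hs'
    exact ha ((Finset.mem_powersetCard.1 hs).1 (Finset.mem_insert_self a t))

lemma card_extendFamily {α : Type*} [DecidableEq α] {k : ℕ} {S : Finset α} {a : α}
    (ha : a ∉ S) {A : Finset (Finset α)} (hA : ∀ s ∈ A, s ⊆ S) :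
    (extendFamily k S a A).card = S.card.choose (k + 1) + A.card :=
  card_union_image_insert ha hA

/-- The sets obtained by deleting `a` from `insert a s` are `k`-subsets of `S`, so they
are already in the shadow of the complete part. -/
lemma shadow_extendFamily {α : Type*} [DecidableEq α] {k : ℕ} {S : Finset α} {a : α}
    (ha : a ∉ S) (hk : k + 1 ≤ S.card) {A : Finset (Finset α)}
    (hA : ∀ s ∈ A, s ⊆ S ∧ s.card = k) :
    (extendFamily k S a A).shadow = S.powersetCard k ∪ A.shadow.image (insert a) := by
  ext t
  simp only [Finset.mem_shadow_iff, extendFamily, Finset.mem_union, Finset.mem_image,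
    Finset.mem_powersetCard]
  constructor
  · rintro ⟨s, ⟨hsS, hs⟩ | ⟨u, hu, rfl⟩, b, hb, rfl⟩
    · left
      exact ⟨(Finset.erase_subset _ _).trans hsS, by rw [Finset.card_erase_of_mem hb, hs]; rfl⟩
    · have hau : a ∉ u := fun h => ha ((hA u hu).1 h)
      by_cases hba : b = a
      · subst hba
        left
        rw [Finset.erase_insert hau]
        exact hA u hu
      · right
        have hbu : b ∈ u := Finset.mem_of_mem_insert_of_ne hb hba
        exact ⟨u.erase b, ⟨u, hu, b, hbu, rfl⟩,
          (Finset.erase_insert_of_ne (Ne.symm hba)).symm⟩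
  · rintro (⟨htS, ht⟩ | ⟨_, ⟨u, hu, b, hb, rfl⟩, rfl⟩)
    · obtain ⟨b, hbS, hbt⟩ := Finset.exists_mem_notMem_of_card_lt_card
        (show t.card < S.card by omega)
      exact ⟨insert b t, Or.inl ⟨Finset.insert_subset hbS htS,
        by rw [Finset.card_insert_of_notMem hbt, ht]⟩, b, Finset.mem_insert_self _ _,
        Finset.erase_insert hbt⟩
    · have hba : a ≠ b := fun h => ha ((hA u hu).1 (h ▸ hb))
      exact ⟨insert a u, Or.inr ⟨u, hu, rfl⟩, b, Finset.mem_insert_of_mem hb,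
        Finset.erase_insert_of_ne hba⟩

lemma card_shadow_extendFamily {α : Type*} [DecidableEq α] {k : ℕ} {S : Finset α} {a : α}
    (ha : a ∉ S) (hk : k + 1 ≤ S.card) {A : Finset (Finset α)}
    (hA : ∀ s ∈ A, s ⊆ S ∧ s.card = k) :
    (extendFamily k S a A).shadow.card = S.card.choose k + A.shadow.card := by
  rw [shadow_extendFamily ha hk hA]
  refine card_union_image_insert ha fun t ht => ?_
  obtain ⟨s, hs, b, -, rfl⟩ := Finset.mem_shadow_iff.1 ht
  exact (Finset.erase_subset _ _).trans (hA s hs).1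

/-- A family of `k`-sets on the first `2k` points with one member more than its shadow. -/
lemma exists_small_shadow (N k : ℕ) (hk : 2 * k ≤ N) :
    ∃ A : Finset (Finset (Fin N)), (∀ s ∈ A, s.card = k ∧ ∀ x ∈ s, x.val < 2 * k) ∧
      A.card = (∑ j ∈ Finset.Icc 1 k, Nat.choose (2 * j - 1) j) + 1 ∧
      A.shadow.card = ∑ j ∈ Finset.Icc 1 k, Nat.choose (2 * j - 1) j := by
  induction k with
  | zero => exact ⟨{∅}, by simp, by simp, by simp⟩
  | succ k ih =>
    obtain ⟨A, hA, hcard, hshadow⟩ := ih (by omega)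
    let a : Fin N := ⟨2 * k + 1, by omega⟩
    let S : Finset (Fin N) := Finset.Iio a
    have hS : S.card = 2 * k + 1 := by simp [S, a]
    have haS : a ∉ S := by simp [S]
    have hAS : ∀ s ∈ A, s ⊆ S ∧ s.card = k := fun s hs =>
      ⟨fun x hx => by
        have := (hA s hs).2 x hx
        simp only [S, a, Finset.mem_Iio, Fin.lt_def]
        omega, (hA s hs).1⟩
    refine ⟨extendFamily k S a A, ?_, ?_, ?_⟩
    · intro s hs
      have hlt : ∀ u ⊆ S, ∀ x ∈ u, x.val < 2 * (k + 1) := fun u hu x hx => by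
        have := hu hx
        simp only [S, a, Finset.mem_Iio, Fin.lt_def] at this
        omega
      rcases Finset.mem_union.1 hs with hs | hs
      · obtain ⟨hs, hc⟩ := Finset.mem_powersetCard.1 hs
        exact ⟨hc, hlt s hs⟩
      · obtain ⟨u, hu, rfl⟩ := Finset.mem_image.1 hs
        refine ⟨?_, ?_⟩
        · rw [Finset.card_insert_of_notMem fun h => haS ((hAS u hu).1 h), (hAS u hu).2]
        · intro x hx
          rcases Finset.mem_insert.1 hx with rfl | hx
          · simp only [a]; omega
          · exact hlt u (hAS u hu).1 x hx
    · rw [card_extendFamily haS fun s hs => (hAS s hs).1, hS, hcard,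
        Finset.sum_Icc_succ_top (by omega), show 2 * (k + 1) - 1 = 2 * k + 1 by omega]
      omega
    · rw [card_shadow_extendFamily haS (by omega) hAS, hS, hshadow,
        Finset.sum_Icc_succ_top (by omega), show 2 * (k + 1) - 1 = 2 * k + 1 by omega,
        Nat.choose_symm_half]
      omega

/-- A uniformly collapsible family has no subfamily larger than its own shadow. -/
lemma UniformlyCollapsible.card_le_card_shadow {α : Type*} [DecidableEq α] {k : ℕ} (hk : 1 ≤ k)
    {𝒜 A : Finset (Finset α)} (h : UniformlyCollapsible k 𝒜) (hA : A ⊆ 𝒜)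
    (hc : ∀ s ∈ A, s.card = k) : A.card ≤ A.shadow.card := by
  obtain ⟨f, hf, hf'⟩ := h
  refine Finset.card_le_card_of_injOn f (fun s hs => ?_) (hf.mono (by exact_mod_cast hA))
  obtain ⟨h1, h2⟩ := hf' s (hA hs)
  refine Finset.mem_coe.2 (Finset.mem_shadow_iff_exists_mem_card_add_one.2 ⟨s, hs, h1, ?_⟩)
  rw [hc s hs, h2]
  omega

/-- For `δ ≥ 3` and `n ≥ 2δ`, there is a family `𝒜̃` of `δ`-element subsets of
`[n+δ-1]` with `|𝒜̃| = ξ_δ + 2` and `|∂𝒜̃| = ξ_δ + δ` (so `|∂𝒜̃| > |𝒜̃|`), yet `𝒜̃` is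
not uniformly collapsible. -/
theorem stmt_8 (δ n : ℕ) (hδ : 3 ≤ δ) (hn : 2 * δ ≤ n) :
    ∃ 𝒜 : Finset (Finset (Fin (n + δ - 1))), (∀ s ∈ 𝒜, s.card = δ) ∧
      𝒜.card = (∑ j ∈ Finset.Icc 1 δ, Nat.choose (2 * j - 1) j) + 2 ∧
      𝒜.shadow.card = (∑ j ∈ Finset.Icc 1 δ, Nat.choose (2 * j - 1) j) + δ ∧
      𝒜.card < 𝒜.shadow.card ∧
      ¬ UniformlyCollapsible δ 𝒜 := by
  obtain ⟨A, hA, hcard, hshadow⟩ := exists_small_shadow (n + δ - 1) δ (by omega)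
  -- Points are numbered from 0, so the last `δ` of the `n + δ - 1` points start at `n - 1`.
  let E : Finset (Fin (n + δ - 1)) := Finset.Ici ⟨n - 1, by omega⟩
  have hE : E.card = δ := by
    simp only [E, Fin.card_Ici]
    omega
  -- `2δ - 1` is the only point that `E` can share with a member of `A`.
  have hinter : ∀ s ∈ A, ∀ t ⊆ s, t ⊆ E → t.card ≤ 1 := by
    intro s hs t hts htE
    refine Finset.card_le_one.2 fun x hx y hy => ?_
    have hx1 := (hA s hs).2 x (hts hx)
    have hy1 := (hA s hs).2 y (hts hy)
    have hx2 := htE hx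
    have hy2 := htE hy
    simp only [E, Finset.mem_Ici, Fin.le_def] at hx2 hy2
    exact Fin.ext (by omega)
  have hEA : E ∉ A := fun h => by
    have := hinter E h E (Finset.Subset.refl _) (Finset.Subset.refl _)
    omega
  have hEshadow : (Finset.shadow {E}).card = δ := by
    have : Finset.shadow {E} = E.image E.erase := by simp [Finset.shadow]
    rw [this, Finset.card_image_of_injOn (Finset.erase_injOn E), hE]
  have hshadow' : (insert E A).shadow.card =
      (∑ j ∈ Finset.Icc 1 δ, Nat.choose (2 * j - 1) j) + δ := by
    have hunion : (insert E A).shadow = A.shadow ∪ Finset.shadow {E} := by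
      ext t
      simp only [Finset.mem_shadow_iff, Finset.mem_union, Finset.mem_insert,
        Finset.mem_singleton, or_and_right, exists_or]
      exact or_comm
    rw [hunion, Finset.card_union_of_disjoint, hshadow, hEshadow]
    rw [Finset.disjoint_left]
    intro t ht ht'
    obtain ⟨s, hs, b, hb, rfl⟩ := Finset.mem_shadow_iff.1 ht
    obtain ⟨s', hs', c, -, hc⟩ := Finset.mem_shadow_iff.1 ht'
    rw [Finset.mem_singleton.1 hs'] at hc
    have h1 := hinter s hs _ (Finset.erase_subset b s) (hc ▸ Finset.erase_subset c E)
    rw [Finset.card_erase_of_mem hb, (hA s hs).1] at h1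
    omega
  have hcard' : (insert E A).card = (∑ j ∈ Finset.Icc 1 δ, Nat.choose (2 * j - 1) j) + 2 := by
    rw [Finset.card_insert_of_notMem hEA, hcard]
  refine ⟨insert E A, ?_, hcard', hshadow', by omega, fun h => ?_⟩
  · intro s hs
    rcases Finset.mem_insert.1 hs with rfl | hs
    · exact hE
    · exact (hA s hs).1
  · have := h.card_le_card_shadow (by omega) (Finset.subset_insert E A) fun s hs => (hA s hs).1
    omega
end

section
/- Let n ≥ 4 and let E be the family of 2-element subsets of [n] = {1,…,n} given by E = {{i, i+1} : 1 ≤ i ≤ n-1} ∪ {{1, n}} ∪ {{1, 3}} (an n-cycle together with the chord {1,3}). Then |E| = n+1, E is not uniformly collapsible, and every proper subfamily E' ⊊ E is uniformly collapsible. -/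
namespace CycleChord

/-- Smaller endpoint of edge `i`. -/
def lo (n i : ℕ) : ℕ := if i = 0 ∨ i = n then 1 else i

/-- Larger endpoint of edge `i`. -/
def hi (n i : ℕ) : ℕ := if i = 0 then 3 else if i = n then n else i + 1

/-- Edge `i` of the `n`-cycle with chord, for `i ≤ n`. -/
def edge (n i : ℕ) : Finset ℕ := {lo n i, hi n i}

lemma pair_injective {a b c d : ℕ} (hab : a < b) (hcd : c < d)
    (h : ({a, b} : Finset ℕ) = {c, d}) : a = c ∧ b = d := by
  have ha : a ∈ ({c, d} : Finset ℕ) := h ▸ by simp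
  have hb : b ∈ ({c, d} : Finset ℕ) := h ▸ by simp
  simp only [Finset.mem_insert, Finset.mem_singleton] at ha hb
  have hc : c ∈ ({a, b} : Finset ℕ) := h ▸ by simp
  simp only [Finset.mem_insert, Finset.mem_singleton] at hc
  omega

lemma lo_lt_hi {n i : ℕ} (hn : 4 ≤ n) : lo n i < hi n i := by
  unfold lo hi
  split_ifs <;> omega

lemma edge_injective {n i k : ℕ} (hn : 4 ≤ n) (h : edge n i = edge n k) : i = k := by
  obtain ⟨h1, h2⟩ := pair_injective (lo_lt_hi hn) (lo_lt_hi hn) h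
  unfold lo at h1
  unfold hi at h2
  split_ifs at h1 h2 <;> omega

lemma edge_subset {n i : ℕ} (hn : 4 ≤ n) (hi' : i ≤ n) : edge n i ⊆ Finset.Icc 1 n := by
  intro x hx
  simp only [edge, lo, hi, Finset.mem_insert, Finset.mem_singleton] at hx
  rw [Finset.mem_Icc]
  split_ifs at hx <;> omega

lemma family_eq {n : ℕ} (hn : 4 ≤ n) :
    ((Finset.Icc 1 (n - 1)).image fun i => ({i, i + 1} : Finset ℕ)) ∪
      {({1, n} : Finset ℕ), ({1, 3} : Finset ℕ)} = (Finset.range (n + 1)).image (edge n) := by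
  have hmid : ∀ i, 1 ≤ i → i ≤ n - 1 → edge n i = {i, i + 1} := by
    intro i h1 h2
    have h0 : i ≠ 0 := by omega
    have hin : i ≠ n := by omega
    simp [edge, lo, hi, h0, hin]
  have hzero : edge n 0 = {1, 3} := by simp [edge, lo, hi]
  have hlast : edge n n = {1, n} := by
    have h0 : n ≠ 0 := by omega
    simp [edge, lo, hi, h0]
  ext F
  simp only [Finset.mem_union, Finset.mem_image, Finset.mem_Icc, Finset.mem_insert,
    Finset.mem_singleton, Finset.mem_range]
  constructor
  · rintro (⟨i, ⟨h1, h2⟩, rfl⟩ | rfl | rfl)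
    · exact ⟨i, by omega, hmid i h1 h2⟩
    · exact ⟨n, by omega, hlast⟩
    · exact ⟨0, by omega, hzero⟩
  · rintro ⟨i, hi', rfl⟩
    by_cases h0 : i = 0
    · subst h0
      exact Or.inr (Or.inr hzero)
    by_cases hin : i = n
    · subst hin
      exact Or.inr (Or.inl hlast)
    · exact Or.inl ⟨i, by omega, (hmid i (by omega) (by omega)).symm⟩

/-- Once edge `j` is removed, the remaining edges have distinct representatives. -/
lemma exists_representatives {n j : ℕ} (hn : 4 ≤ n) (hj : j ≤ n) :
    ∃ r : ℕ → ℕ, (∀ i ≤ n, i ≠ j → r i ∈ edge n i) ∧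
      ∀ i ≤ n, i ≠ j → ∀ k ≤ n, k ≠ j → r i = r k → i = k := by
  simp only [edge, lo, hi, Finset.mem_insert, Finset.mem_singleton]
  rcases Nat.eq_zero_or_pos j with h0 | h0
  · refine ⟨id, ?_, ?_⟩
    · intro i h1 h2
      simp only [id]
      split_ifs <;> omega
    · intro i _ _ k _ _ h
      exact h
  rcases Nat.lt_or_ge j 3 with h3 | h3
  · -- Only edges `1` and `2` share a representative, and one of them is absent.
    refine ⟨fun i => if i = 0 then 1 else if i = 1 then 2 else i, ?_, ?_⟩
    · intro i h1 h2
      dsimp only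
      split_ifs <;> omega
    · intro i _ _ k _ _ h
      dsimp only at h
      split_ifs at h <;> omega
  · -- The triangle uses vertices `1, 2, 3`; edges before the gap take their larger endpoint,
    -- edges after it the endpoint sharing their index.
    refine ⟨fun i => if i = 0 then 3 else if i < 3 then i else if i < j then i + 1 else i, ?_, ?_⟩
    · intro i h1 h2
      dsimp only
      split_ifs <;> omega
    · intro i _ _ k _ _ h
      dsimp only at h
      split_ifs at h <;> omega

end CycleChord

open CycleChord in
/-- For `n ≥ 4`, the edge family of the `n`-cycle on `{1,…,n}` together with the chord
`{1,3}` has `n+1` members, is not uniformly collapsible, but every proper subfamily is. -/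
theorem stmt_9 (n : ℕ) (hn : 4 ≤ n)
    (E : Finset (Finset ℕ))
    (hE : E = ((Finset.Icc 1 (n - 1)).image fun i => ({i, i + 1} : Finset ℕ)) ∪
      {({1, n} : Finset ℕ), ({1, 3} : Finset ℕ)}) :
    E.card = n + 1 ∧ ¬ UniformlyCollapsible 2 E ∧
      ∀ E' ⊂ E, UniformlyCollapsible 2 E' := by
  rw [family_eq hn] at hE
  have hinj : Function.Injective (edge n) := fun _ _ h => edge_injective hn h
  have hcard : E.card = n + 1 := by
    rw [hE, Finset.card_image_of_injective _ hinj, Finset.card_range]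
  refine ⟨hcard, ?_, ?_⟩
  · rintro ⟨f, hf, hfE⟩
    have hmaps : Set.MapsTo f E ((Finset.Icc 1 n).powersetCard 1) := by
      intro F hF
      obtain ⟨hsub, hone⟩ := hfE F hF
      rw [Finset.mem_coe, hE, Finset.mem_image] at hF
      obtain ⟨i, hi', rfl⟩ := hF
      rw [Finset.mem_range] at hi'
      exact Finset.mem_coe.2 (Finset.mem_powersetCard.2
        ⟨hsub.trans (edge_subset hn (by omega)), hone⟩)
    have hle := Finset.card_le_card_of_injOn f hmaps hf
    rw [hcard, Finset.card_powersetCard, Nat.card_Icc, Nat.choose_one_right] at hle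
    omega
  · intro E' hE'
    have hsub := hE'.subset
    obtain ⟨F₀, hF₀, hF₀'⟩ := Finset.exists_of_ssubset hE'
    rw [hE, Finset.mem_image] at hF₀
    obtain ⟨j, hj, rfl⟩ := hF₀
    rw [Finset.mem_range] at hj
    obtain ⟨r, hr, hrinj⟩ := exists_representatives hn (show j ≤ n by omega)
    have hlabel : ∀ F ∈ E', ∃ i ≤ n, i ≠ j ∧ edge n i = F := by
      intro F hF
      have hFE := hsub hF
      rw [hE, Finset.mem_image] at hFE
      obtain ⟨i, hi', rfl⟩ := hFE
      rw [Finset.mem_range] at hi'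
      exact ⟨i, by omega, fun h => hF₀' (h ▸ hF), rfl⟩
    have hinv : ∀ i, Function.invFun (edge n) (edge n i) = i := Function.leftInverse_invFun hinj
    refine ⟨fun F => {r (Function.invFun (edge n) F)}, ?_, ?_⟩
    · intro F hF G hG h
      obtain ⟨i, hi', hij, rfl⟩ := hlabel F hF
      obtain ⟨k, hk, hkj, rfl⟩ := hlabel G hG
      simp only [hinv, Finset.singleton_inj] at h
      rw [hrinj i hi' hij k hk hkj h]
    · intro F hF
      obtain ⟨i, hi', hij, rfl⟩ := hlabel F hF
      simp only [hinv, Finset.singleton_subset_iff, Finset.card_singleton]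
      exact ⟨hr i hi' hij, trivial⟩
end

section
/- Let 1 ≤ d < n and let G be a family of distinct d-element subsets of [n] = {1,…,n}. Let P = G ∪ { B ⊆ [n] : |B| = d+1 and g ⊆ B for some g ∈ G }. Then the following are equivalent: (a) P can be written as a disjoint union of intervals [A, B] = {C ∈ P : A ⊆ C ⊆ B} with |B| = d+1 for every interval; (b) there exists an injective map φ from G into the (d+1)-element subsets of [n] with g ⊆ φ(g) for all g ∈ G; (c) the complement family { [n] \ g : g ∈ G }, a family of (n-d)-element subsets of [n], is uniformly collapsible. -/
/-- For a family `G` of `d`-element subsets of `[n]` and the poset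
`P = G ∪ {B : |B| = d+1, g ⊆ B for some g ∈ G}`, the following are equivalent:
(a) `P` is a disjoint union of intervals `[A, B]` with `|B| = d+1`;
(b) there is an injective `φ : G → (d+1)`-subsets of `[n]` with `g ⊆ φ g`;
(c) the complement family `{[n] \ g : g ∈ G}` is uniformly collapsible. -/
theorem stmt_12 (n d : ℕ) (hd : 1 ≤ d) (hdn : d < n)
    (G : Finset (Finset (Fin n))) (hG : ∀ g ∈ G, g.card = d)
    (P : Finset (Finset (Fin n)))
    (hP : P = G ∪ (Finset.univ.powersetCard (d + 1)).filter (fun B => ∃ g ∈ G, g ⊆ B)) :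
    List.TFAE [
      (∃ pairs : Finset (Finset (Fin n) × Finset (Fin n)),
        (∀ p ∈ pairs, p.1 ∈ P ∧ p.2 ∈ P ∧ p.1 ⊆ p.2 ∧ p.2.card = d + 1) ∧
        (∀ C ∈ P, ∃! p, p ∈ pairs ∧ p.1 ⊆ C ∧ C ⊆ p.2)),
      (∃ φ : Finset (Fin n) → Finset (Fin n),
        Set.InjOn φ ↑G ∧ ∀ g ∈ G, g ⊆ φ g ∧ (φ g).card = d + 1),
      UniformlyCollapsible (n - d) (G.image fun g => gᶜ)] := by
  classical
  have hGP : ∀ g ∈ G, g ∈ P := fun g hg => by rw [hP]; exact Finset.mem_union_left _ hg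
  have hPcases : ∀ C ∈ P, C ∈ G ∨ C.card = d + 1 := by
    intro C hC
    rw [hP, Finset.mem_union, Finset.mem_filter, Finset.mem_powersetCard] at hC
    rcases hC with h | h
    · exact Or.inl h
    · exact Or.inr h.1.2
  have hPcard : ∀ C ∈ P, d ≤ C.card := by
    intro C hC
    rcases hPcases C hC with h | h
    · exact (hG C h).ge
    · omega
  have hPup : ∀ g ∈ G, ∀ B : Finset (Fin n), g ⊆ B → B.card = d + 1 → B ∈ P := by
    intro g hg B hgB hB
    rw [hP, Finset.mem_union, Finset.mem_filter, Finset.mem_powersetCard]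
    exact Or.inr ⟨⟨Finset.subset_univ _, hB⟩, g, hg, hgB⟩
  tfae_have 1 → 2 := by
    rintro ⟨pairs, hpairs, huniq⟩
    choose! p hp _ using fun (C : Finset (Fin n)) (hC : C ∈ P) => huniq C hC
    -- the interval covering `g ∈ G` starts at `g`, because `P` has no set smaller than `d`
    have hp1 : ∀ g ∈ G, (p g).1 = g := by
      intro g hg
      obtain ⟨hmem, hsub, -⟩ := hp g (hGP g hg)
      refine Finset.eq_of_subset_of_card_le hsub ?_
      rw [hG g hg]
      exact hPcard _ (hpairs _ hmem).1
    refine ⟨fun g => (p g).2, ?_, fun g hg => ?_⟩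
    · intro g hg g' hg' heq
      have heq' : (p g).2 = (p g').2 := heq
      obtain ⟨hm, -, -⟩ := hp g (hGP g hg)
      obtain ⟨hm', -, -⟩ := hp g' (hGP g' hg')
      obtain ⟨-, -, hsub', -⟩ := hpairs _ hm'
      obtain ⟨-, hB, hsub, -⟩ := hpairs _ hm
      -- the common top lies in both intervals, so they coincide
      have h := (huniq _ hB).unique ⟨hm, hsub, subset_rfl⟩
        ⟨hm', heq' ▸ hsub', heq'.subset⟩
      rw [← hp1 g hg, ← hp1 g' hg', h]
    · obtain ⟨hm, -, hsub⟩ := hp g (hGP g hg)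
      exact ⟨hsub, (hpairs _ hm).2.2.2⟩
  tfae_have 2 → 1 := by
    rintro ⟨φ, hinj, hφ⟩
    refine ⟨G.image (fun g => (g, φ g)) ∪
      (P.filter (fun B => B.card = d + 1 ∧ ∀ g ∈ G, φ g ≠ B)).image (fun B => (B, B)), ?_, ?_⟩
    · intro q hq
      rcases Finset.mem_union.1 hq with h | h
      · obtain ⟨g, hg, rfl⟩ := Finset.mem_image.1 h
        exact ⟨hGP g hg, hPup g hg _ (hφ g hg).1 (hφ g hg).2, hφ g hg⟩
      · obtain ⟨B, hB, rfl⟩ := Finset.mem_image.1 h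
        obtain ⟨hBP, hBc, -⟩ := Finset.mem_filter.1 hB
        exact ⟨hBP, hBP, subset_rfl, hBc⟩
    · intro C hC
      by_cases hCG : C ∈ G
      · refine ⟨(C, φ C), ⟨Finset.mem_union_left _ (Finset.mem_image_of_mem _ hCG), subset_rfl,
          (hφ C hCG).1⟩, ?_⟩
        rintro q ⟨hq, hq1, hq2⟩
        rcases Finset.mem_union.1 hq with h | h
        · obtain ⟨g, hg, rfl⟩ := Finset.mem_image.1 h
          have : g = C := Finset.eq_of_subset_of_card_le hq1 (by rw [hG g hg, hG C hCG])
          rw [this]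
        · obtain ⟨B, hB, rfl⟩ := Finset.mem_image.1 h
          have h1 := (Finset.mem_filter.1 hB).2.1
          have h2 := Finset.card_le_card hq1
          have h3 := hG C hCG
          simp only at h2
          omega
      · have hCc : C.card = d + 1 := (hPcases C hC).resolve_left hCG
        by_cases hex : ∃ g ∈ G, φ g = C
        · obtain ⟨g, hg, rfl⟩ := hex
          refine ⟨(g, φ g), ⟨Finset.mem_union_left _ (Finset.mem_image_of_mem _ hg), (hφ g hg).1,
            subset_rfl⟩, ?_⟩
          rintro q ⟨hq, hq1, hq2⟩
          rcases Finset.mem_union.1 hq with h | h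
          · obtain ⟨g', hg', rfl⟩ := Finset.mem_image.1 h
            have : φ g = φ g' := Finset.eq_of_subset_of_card_le hq2
              (by rw [(hφ g hg).2, (hφ g' hg').2])
            rw [hinj hg hg' this]
          · obtain ⟨B, hB, rfl⟩ := Finset.mem_image.1 h
            exact absurd (subset_antisymm hq2 hq1) ((Finset.mem_filter.1 hB).2.2 g hg)
        · push Not at hex
          refine ⟨(C, C), ⟨Finset.mem_union_right _ (Finset.mem_image_of_mem _
            (Finset.mem_filter.2 ⟨hC, hCc, hex⟩)), subset_rfl, subset_rfl⟩, ?_⟩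
          rintro q ⟨hq, hq1, hq2⟩
          rcases Finset.mem_union.1 hq with h | h
          · obtain ⟨g', hg', rfl⟩ := Finset.mem_image.1 h
            have : C = φ g' := Finset.eq_of_subset_of_card_le hq2 (by rw [hCc, (hφ g' hg').2])
            exact absurd this.symm (hex g' hg')
          · obtain ⟨B, hB, rfl⟩ := Finset.mem_image.1 h
            have : B = C := subset_antisymm hq1 hq2
            rw [this]
  tfae_have 2 → 3 := by
    rintro ⟨φ, hinj, hφ⟩
    refine ⟨fun F => (φ Fᶜ)ᶜ, ?_, ?_⟩
    · intro F hF F' hF' heq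
      obtain ⟨g, hg, rfl⟩ := Finset.mem_image.1 (Finset.mem_coe.1 hF)
      obtain ⟨g', hg', rfl⟩ := Finset.mem_image.1 (Finset.mem_coe.1 hF')
      simp only [compl_compl, compl_inj_iff] at heq
      rw [hinj hg hg' heq]
    · intro F hF
      obtain ⟨g, hg, rfl⟩ := Finset.mem_image.1 hF
      simp only [compl_compl]
      refine ⟨Finset.compl_subset_compl.2 (hφ g hg).1, ?_⟩
      rw [Finset.card_compl, Fintype.card_fin, (hφ g hg).2]
      omega
  tfae_have 3 → 2 := by
    rintro ⟨f, hinj, hf⟩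
    have hmem : ∀ g ∈ G, gᶜ ∈ G.image fun g => gᶜ := fun g hg => Finset.mem_image_of_mem _ hg
    refine ⟨fun g => (f gᶜ)ᶜ, ?_, ?_⟩
    · intro g hg g' hg' heq
      exact compl_injective (hinj (hmem g hg) (hmem g' hg') (compl_injective heq))
    · intro g hg
      obtain ⟨hsub, hcard⟩ := hf _ (hmem g hg)
      refine ⟨Finset.subset_compl_comm.1 hsub, ?_⟩
      -- `n - (n - d - 1) = d + 1` in `ℕ` uses `d < n`
      rw [Finset.card_compl, Fintype.card_fin, hcard]
      omega
  tfae_finish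
end
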